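/- arXiv:2104.06302 — 4 statements merged into one kernel-verified Lean document; each statement's English description precedes it below -/
import Mathlib

section
/- Let σ be a saturation function and for ε>0 define the time-varying vector field f_ε(t,z) = b_ε(t)·σ(b_ε(t)ᵀz) on ℝ₊×ℝ², where b_ε(t) = R_{−2πt/ε}e₂. Then for every 0≤a<c, the averages (1/(c−a))·∫_a^c f_ε(t,z) dt converge to f(z) as ε→0⁺, uniformly with respect to z∈ℝ²; that is, sup_{z∈ℝ²} ‖(1/(c−a))·∫_a^c b_ε(t)·σ(b_ε(t)ᵀz) dt − f(z)‖ → 0 as ε→0⁺. -/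
open Real Filter MeasureTheory intervalIntegral RealInnerProductSpace

noncomputable section

/-- A saturation function: odd, globally Lipschitz, sign-definite, with finite positive limits
of `σ` at `+∞` and of `σ ξ / ξ` at `0`, non-decreasing, differentiable on `(0,∞)` with
non-increasing derivative there. -/
def IsSaturation (σ : ℝ → ℝ) : Prop :=
  (∀ ξ, σ (-ξ) = -σ ξ) ∧
  (∃ L : NNReal, LipschitzWith L σ) ∧
  (∀ ξ : ℝ, ξ ≠ 0 → σ ξ * ξ > 0) ∧
  (∃ l > 0, Tendsto σ atTop (nhds l)) ∧
  (∃ l > 0, Tendsto (fun ξ => σ ξ / ξ) (nhdsWithin 0 {(0:ℝ)}ᶜ) (nhds l)) ∧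
  Monotone σ ∧
  DifferentiableOn ℝ σ (Set.Ioi 0) ∧
  AntitoneOn (deriv σ) (Set.Ioi 0)

/-- The modified saturation function `S` associated with `σ`:
`S ξ = (2/π) ∫_0^{π/2} sin v · σ(ξ sin v) dv`. -/
def modSat (σ : ℝ → ℝ) (ξ : ℝ) : ℝ :=
  (2 / Real.pi) * ∫ v in (0:ℝ)..(Real.pi / 2), Real.sin v * σ (ξ * Real.sin v)

abbrev E2 := EuclideanSpace ℝ (Fin 2)

open Classical in
/-- The radial vector field `f(z) = S(‖z‖) z / ‖z‖`, `f(0) = 0`. -/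
def fvec (σ : ℝ → ℝ) (z : E2) : E2 :=
  if z = 0 then 0 else (modSat σ ‖z‖ / ‖z‖) • z

/-- `b_ε(t) = R_{-2πt/ε} e₂ = (sin(2πt/ε), cos(2πt/ε))`. -/
def bvp (ε t : ℝ) : E2 :=
  (WithLp.equiv 2 (Fin 2 → ℝ)).symm ![Real.sin (2 * Real.pi * t / ε), Real.cos (2 * Real.pi * t / ε)]

theorem aux_avg (g : ℝ → E2) (hg : Continuous g) (hp : Function.Periodic g (2 * Real.pi))
    (M : ℝ) (hM : ∀ x, ‖g x‖ ≤ M) (m : E2)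
    (hm : ∫ x in (0:ℝ)..(2 * Real.pi), g x = (2 * Real.pi) • m) (x y : ℝ) (hxy : x ≤ y) :
    ‖(∫ t in x..y, g t) - (y - x) • m‖ ≤ 4 * Real.pi * M := by
  have hpi := Real.pi_pos
  have hi : ∀ p q, IntervalIntegrable g volume p q := fun p q => hg.intervalIntegrable p q
  have hmM : ‖m‖ ≤ M := by
    have h1 := intervalIntegral.norm_integral_le_of_norm_le_const (a := 0) (b := 2 * Real.pi)
      (f := g) (C := M) (fun x _ => hM x)
    rw [hm, norm_smul, Real.norm_eq_abs, sub_zero, abs_of_pos (by positivity), mul_comm] at h1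
    exact le_of_mul_le_mul_right h1 (by positivity)
  set n := ⌊(y - x) / (2 * Real.pi)⌋ with hn
  have h1 : (n : ℝ) * (2 * Real.pi) ≤ y - x := by
    have := Int.floor_le ((y - x) / (2 * Real.pi))
    rwa [le_div_iff₀ (by positivity)] at this
  have h2 : y - x < (n + 1 : ℝ) * (2 * Real.pi) := by
    have := Int.lt_floor_add_one ((y - x) / (2 * Real.pi))
    rwa [div_lt_iff₀ (by positivity)] at this
  have h3 : ∫ t in x..(x + n * (2 * Real.pi)), g t = (n * (2 * Real.pi)) • m := by
    have := hp.intervalIntegral_add_zsmul_eq n x hi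
    rw [zsmul_eq_mul, hp.intervalIntegral_add_eq x 0, zero_add, hm] at this
    rw [this, ← Int.cast_smul_eq_zsmul ℝ, smul_smul]
  have h4 := intervalIntegral.integral_add_adjacent_intervals (hi x (x + n * (2 * Real.pi)))
    (hi (x + n * (2 * Real.pi)) y)
  have h5 := intervalIntegral.norm_integral_le_of_norm_le_const (a := x + n * (2 * Real.pi))
      (b := y) (f := g) (C := M) (fun x _ => hM x)
  have hM0 : 0 ≤ M := (norm_nonneg _).trans hmM
  set r := y - (x + n * (2 * Real.pi)) with hr
  have hr0 : 0 ≤ r := by linarith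
  have hr1 : r ≤ 2 * Real.pi := by linarith
  rw [abs_of_nonneg hr0] at h5
  have h6 : (∫ t in x..y, g t) - (y - x) • m
      = (∫ t in (x + n * (2 * Real.pi))..y, g t) - r • m := by
    rw [← h4, h3, hr]; module
  rw [h6]
  refine (norm_sub_le _ _).trans ?_
  rw [norm_smul, Real.norm_eq_abs, abs_of_nonneg hr0]
  nlinarith [mul_le_mul_of_nonneg_left hmM hr0, mul_le_mul_of_nonneg_right hr1 hM0]

theorem aux_sin (σ : ℝ → ℝ) (ho : ∀ ξ, σ (-ξ) = -σ ξ) (hc : Continuous σ) (r : ℝ) :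
    ∫ v in (0:ℝ)..(2 * Real.pi), σ (r * Real.sin v) * Real.sin v
      = 4 * ∫ v in (0:ℝ)..(Real.pi / 2), Real.sin v * σ (r * Real.sin v) := by
  have hcont : Continuous (fun v => Real.sin v * σ (r * Real.sin v)) := by fun_prop
  have hi : ∀ p q, IntervalIntegrable (fun v => Real.sin v * σ (r * Real.sin v)) volume p q :=
    fun p q => hcont.intervalIntegrable p q
  have hp : Function.Periodic (fun v => Real.sin v * σ (r * Real.sin v)) Real.pi := by
    intro v
    simp only [Real.sin_add_pi, mul_neg, ho, neg_mul, neg_neg]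
  have e1 : ∫ v in Real.pi..(2 * Real.pi), Real.sin v * σ (r * Real.sin v)
      = ∫ v in (0:ℝ)..Real.pi, Real.sin v * σ (r * Real.sin v) := by
    have := hp.intervalIntegral_add_eq Real.pi 0
    rw [zero_add, ← two_mul] at this
    exact this
  have e2 : ∫ v in (Real.pi / 2)..Real.pi, Real.sin v * σ (r * Real.sin v)
      = ∫ v in (0:ℝ)..(Real.pi / 2), Real.sin v * σ (r * Real.sin v) := by
    have := intervalIntegral.integral_comp_sub_left (a := 0) (b := Real.pi / 2)
      (fun v => Real.sin v * σ (r * Real.sin v)) Real.pi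
    simp only [Real.sin_pi_sub, sub_zero] at this
    rw [this]; congr 1; ring
  have e3 := intervalIntegral.integral_add_adjacent_intervals (hi 0 Real.pi) (hi Real.pi (2 * Real.pi))
  have e4 := intervalIntegral.integral_add_adjacent_intervals (hi 0 (Real.pi / 2)) (hi (Real.pi / 2) Real.pi)
  simp only [mul_comm (σ _)]
  linarith

theorem aux_cos (σ : ℝ → ℝ) (ho : ∀ ξ, σ (-ξ) = -σ ξ) (r : ℝ) :
    ∫ v in (0:ℝ)..(2 * Real.pi), σ (r * Real.sin v) * Real.cos v = 0 := by
  have := intervalIntegral.integral_comp_sub_left (a := 0) (b := 2 * Real.pi)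
      (fun v => σ (r * Real.sin v) * Real.cos v) (2 * Real.pi)
  simp only [Real.sin_two_pi_sub, Real.cos_two_pi_sub, sub_zero, sub_self, mul_neg, ho, neg_mul,
    intervalIntegral.integral_neg] at this
  linarith

/-- The rotating unit vector. -/
def bAng (θ : ℝ) : E2 := !₂[Real.sin θ, Real.cos θ]

theorem bAng_cont : Continuous bAng := by
  unfold bAng
  fun_prop

theorem bAng_norm (θ : ℝ) : ‖bAng θ‖ = 1 := by
  simp [bAng, EuclideanSpace.norm_eq]

theorem bAng_inner (θ : ℝ) (z : E2) : ⟪bAng θ, z⟫ = Real.sin θ * z 0 + Real.cos θ * z 1 := by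
  simp [bAng, PiLp.inner_apply, Fin.sum_univ_two, mul_comm]

theorem aux_polar (z : E2) : ∃ ψ : ℝ, z = ‖z‖ • (!₂[Real.cos ψ, -Real.sin ψ] : E2) := by
  refine ⟨Complex.arg ⟨z 0, -z 1⟩, ?_⟩
  have hn : ‖z‖ = ‖(⟨z 0, -z 1⟩ : ℂ)‖ := by
    rw [EuclideanSpace.norm_eq, Complex.norm_def, Complex.normSq_mk]
    simp [Fin.sum_univ_two, sq]
  ext i
  fin_cases i
  · simp [hn, Complex.norm_mul_cos_arg]
  · simp [hn, Complex.norm_mul_sin_arg]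

theorem aux_mean (σ : ℝ → ℝ) (ho : ∀ ξ, σ (-ξ) = -σ ξ) (hc : Continuous σ) (z : E2) :
    ∫ x in (0:ℝ)..(2 * Real.pi), σ ⟪bAng x, z⟫ • bAng x = (2 * Real.pi) • fvec σ z := by
  have h0 : σ 0 = 0 := by
    have := ho 0
    rw [neg_zero] at this; linarith
  by_cases hz : z = 0
  · simp [hz, fvec, h0]
  have hpi := Real.pi_pos
  obtain ⟨ψ, hψ⟩ := aux_polar z
  set r := ‖z‖ with hr
  have hr0 : r ≠ 0 := by simpa [hr] using hz
  have hper : Function.Periodic (fun x => σ ⟪bAng x, z⟫ • bAng x) (2 * Real.pi) := by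
    intro x; simp [bAng]
  have e1 : ∫ x in (0:ℝ)..(2 * Real.pi), σ ⟪bAng x, z⟫ • bAng x
      = ∫ x in (0:ℝ)..(2 * Real.pi), σ ⟪bAng (x + ψ), z⟫ • bAng (x + ψ) := by
    rw [intervalIntegral.integral_comp_add_right (fun x => σ ⟪bAng x, z⟫ • bAng x) ψ, zero_add,
      add_comm (2 * Real.pi), hper.intervalIntegral_add_eq ψ 0, zero_add]
  have e2 : ∀ x, σ ⟪bAng (x + ψ), z⟫ • bAng (x + ψ)
      = (σ (r * Real.sin x) * Real.sin x) • (!₂[Real.cos ψ, -Real.sin ψ] : E2)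
        + (σ (r * Real.sin x) * Real.cos x) • (!₂[Real.sin ψ, Real.cos ψ] : E2) := by
    intro x
    have : ⟪bAng (x + ψ), z⟫ = r * Real.sin x := by
      rw [hψ, bAng_inner, Real.sin_add, Real.cos_add]
      simp
      linear_combination (r * Real.sin x) * Real.sin_sq_add_cos_sq ψ
    rw [this]
    ext i
    fin_cases i
    · simp [bAng, Real.sin_add]; ring
    · simp [bAng, Real.cos_add]; ring
  rw [e1]
  simp only [e2]
  rw [intervalIntegral.integral_add, intervalIntegral.integral_smul_const,
    intervalIntegral.integral_smul_const, aux_cos σ ho, aux_sin σ ho hc, zero_smul, add_zero, fvec,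
    if_neg hz, modSat, ← hr]
  · conv_rhs => rw [hψ]
    rw [smul_smul, smul_smul]
    congr 1
    generalize (∫ v in (0:ℝ)..(Real.pi / 2), Real.sin v * σ (r * Real.sin v)) = J
    field_simp
    ring
  · apply Continuous.intervalIntegrable; fun_prop
  · apply Continuous.intervalIntegrable; fun_prop

/-- The averages `(1/(c-a)) ∫_a^c b_ε(t) σ(b_ε(t)ᵀ z) dt` converge to `f(z)` as `ε → 0⁺`,
uniformly in `z ∈ ℝ²`. -/
theorem stmt5 (σ : ℝ → ℝ) (hσ : IsSaturation σ) (a c : ℝ) (ha : 0 ≤ a) (hac : a < c) :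
    ∀ δ > 0, ∃ ε₀ > 0, ∀ ε : ℝ, 0 < ε → ε < ε₀ → ∀ z : E2,
      ‖(c - a)⁻¹ • (∫ t in a..c, σ ⟪bvp ε t, z⟫ • bvp ε t) - fvec σ z‖ ≤ δ := by
  obtain ⟨ho, ⟨L, hL⟩, -, ⟨l, hl, hlim⟩, -, hmono, -, -⟩ := hσ
  have hc := hL.continuous
  have hpi := Real.pi_pos
  have hle : ∀ x, σ x ≤ l := fun x => hmono.ge_of_tendsto hlim x
  have habs : ∀ x, |σ x| ≤ l := fun x => abs_le.2 ⟨by linarith [hle (-x), ho x], hle x⟩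
  intro δ hδ
  have hca : 0 < c - a := sub_pos.2 hac
  refine ⟨δ * (c - a) / (2 * l), by positivity, fun ε hε hεε z => ?_⟩
  have hcont : Continuous (fun x => σ ⟪bAng x, z⟫ • bAng x) := by
    have := bAng_cont
    fun_prop
  have hper : Function.Periodic (fun x => σ ⟪bAng x, z⟫ • bAng x) (2 * Real.pi) := by
    intro x; simp [bAng]
  have hk : 0 < 2 * Real.pi / ε := by positivity
  have key := aux_avg _ hcont hper l (fun x => by
    rw [norm_smul, bAng_norm, mul_one, Real.norm_eq_abs]; exact habs _) _
    (aux_mean σ ho hc z) (2 * Real.pi / ε * a) (2 * Real.pi / ε * c)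
    (mul_le_mul_of_nonneg_left hac.le hk.le)
  have hI : ∫ t in a..c, σ ⟪bvp ε t, z⟫ • bvp ε t
      = (2 * Real.pi / ε)⁻¹ • ∫ x in (2 * Real.pi / ε * a)..(2 * Real.pi / ε * c),
        σ ⟪bAng x, z⟫ • bAng x := by
    rw [← intervalIntegral.integral_comp_mul_left (fun x => σ ⟪bAng x, z⟫ • bAng x) hk.ne']
    have : ∀ t, bvp ε t = bAng (2 * Real.pi / ε * t) := by
      intro t
      rw [div_mul_eq_mul_div]
      rfl
    simp only [this]
  rw [hI]
  set I := ∫ x in (2 * Real.pi / ε * a)..(2 * Real.pi / ε * c), σ ⟪bAng x, z⟫ • bAng x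
  have heq : (c - a)⁻¹ • (2 * Real.pi / ε)⁻¹ • I - fvec σ z
      = ((c - a)⁻¹ * (2 * Real.pi / ε)⁻¹) •
        (I - (2 * Real.pi / ε * c - 2 * Real.pi / ε * a) • fvec σ z) := by
    rw [smul_sub, smul_smul, smul_smul, ← mul_sub]
    have : (c - a)⁻¹ * (2 * Real.pi / ε)⁻¹ * (2 * Real.pi / ε * (c - a)) = 1 := by
      field_simp
    rw [this, one_smul]
  rw [heq, norm_smul, Real.norm_eq_abs, abs_of_pos (by positivity)]
  refine (mul_le_mul_of_nonneg_left key (by positivity)).trans ?_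
  rw [lt_div_iff₀ (by positivity)] at hεε
  have : (c - a)⁻¹ * (2 * Real.pi / ε)⁻¹ * (4 * Real.pi * l) = ε * (2 * l) / (c - a) := by
    field_simp
    ring
  rw [this, div_le_iff₀ hca]
  exact hεε.le
end
end

section
/- Let σ be a saturation function, S its modified saturation function, and f the associated vector field on ℝ². Then f is bounded, of class C¹, and for every z,y∈ℝ² one has ⟨y, f(z+y) − f(z)⟩ ≥ 0, with equality if and only if y = 0. -/
open Real Filter MeasureTheory intervalIntegral RealInnerProductSpace

noncomputable section

lemma sat_zero {σ : ℝ → ℝ} (hσ : IsSaturation σ) : σ 0 = 0 := by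
  have := hσ.1 0
  simp at this
  linarith

lemma sat_deriv_zero {σ : ℝ → ℝ} (hσ : IsSaturation σ) : ∃ l > 0, HasDerivAt σ l 0 := by
  obtain ⟨l, hl, h⟩ := hσ.2.2.2.2.1
  refine ⟨l, hl, ?_⟩
  rw [hasDerivAt_iff_tendsto_slope]
  refine h.congr fun x => ?_
  simp [slope_def_field, sat_zero hσ]

lemma sat_diff {σ : ℝ → ℝ} (hσ : IsSaturation σ) : Differentiable ℝ σ := by
  have hpos : ∀ x : ℝ, 0 < x → DifferentiableAt ℝ σ x := fun x hx =>
    (hσ.2.2.2.2.2.2.1 x hx).differentiableAt (Ioi_mem_nhds hx)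
  intro x
  rcases lt_trichotomy x 0 with h | h | h
  · have h1 : σ = fun y => -σ (-y) := by
      funext y; rw [hσ.1]; simp
    rw [h1]
    have := hpos (-x) (by linarith)
    exact (DifferentiableAt.comp (g := σ) (f := fun y : ℝ => -y) x this (by fun_prop)).neg
  · obtain ⟨l, _, h'⟩ := sat_deriv_zero hσ
    rw [h]; exact h'.differentiableAt
  · exact hpos x h

lemma sat_deriv_even {σ : ℝ → ℝ} (hσ : IsSaturation σ) (x : ℝ) : deriv σ (-x) = deriv σ x := by
  have h1 : σ = fun y => -σ (-y) := by
    funext y; rw [hσ.1]; simp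
  have h2 : deriv σ x = deriv (fun y => -σ (-y)) x := by rw [← h1]
  rw [h2, deriv.fun_neg, deriv_comp_neg]; simp

lemma sat_deriv_anti {σ : ℝ → ℝ} (hσ : IsSaturation σ) : AntitoneOn (deriv σ) (Set.Ici 0) := by
  obtain ⟨l, hl, h0⟩ := sat_deriv_zero hσ
  have key : ∀ x : ℝ, 0 < x → deriv σ x ≤ deriv σ 0 := by
    intro x hx
    rw [h0.deriv]
    have ht : Tendsto (slope σ 0) (nhdsWithin 0 (Set.Ioi 0)) (nhds l) :=
      (hasDerivAt_iff_tendsto_slope.1 h0).mono_left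
        (nhdsWithin_mono _ (fun y hy => ne_of_gt hy))
    refine ge_of_tendsto ht ?_
    filter_upwards [Ioo_mem_nhdsGT hx] with ξ hξ
    obtain ⟨c, hc, hc'⟩ := exists_deriv_eq_slope σ hξ.1 (sat_diff hσ).continuous.continuousOn
      (sat_diff hσ).differentiableOn
    rw [slope_def_field, ← hc']
    exact hσ.2.2.2.2.2.2.2 hc.1 hx (hc.2.trans hξ.2).le
  intro a ha b hb hab
  rcases eq_or_lt_of_le (Set.mem_Ici.1 ha) with h | h
  · rcases eq_or_lt_of_le (Set.mem_Ici.1 hb) with h' | h'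
    · rw [← h, ← h']
    · rw [← h]; exact key b h'
  · exact hσ.2.2.2.2.2.2.2 h (h.trans_le hab) hab

lemma sat_darboux {σ : ℝ → ℝ} (hσ : IsSaturation σ) {a b m : ℝ} (hab : a ≤ b)
    (h1 : deriv σ b ≤ m) (h2 : m ≤ deriv σ a) : ∃ c ∈ Set.Icc a b, deriv σ c = m := by
  have := (Set.ordConnected_Icc (a := a) (b := b)).image_deriv
    (f := σ) (fun x _ => sat_diff hσ x)
  exact this.out (Set.mem_image_of_mem _ (Set.right_mem_Icc.2 hab))
    (Set.mem_image_of_mem _ (Set.left_mem_Icc.2 hab)) ⟨h1, h2⟩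

lemma sat_deriv_cont {σ : ℝ → ℝ} (hσ : IsSaturation σ) : Continuous (deriv σ) := by
  have hA := sat_deriv_anti hσ
  have hon : ContinuousOn (deriv σ) (Set.Ici 0) := by
    intro a ha
    have ha' : 0 ≤ a := ha
    refine tendsto_order.2 ⟨fun b hb => ?_, fun b hb => ?_⟩
    · obtain ⟨c, hac, hc⟩ : ∃ c > a, b < deriv σ c := by
        by_cases h : b < deriv σ (a + 1)
        · exact ⟨a + 1, by linarith, h⟩
        · obtain ⟨c, hc, hc'⟩ := sat_darboux hσ (a := a) (b := a + 1)
            (m := (b + deriv σ a) / 2) (by linarith) (by linarith) (by linarith)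
          refine ⟨c, lt_of_le_of_ne hc.1 ?_, by rw [hc']; linarith⟩
          rintro rfl
          linarith
      filter_upwards [self_mem_nhdsWithin, mem_nhdsWithin_of_mem_nhds (Iio_mem_nhds hac)]
        with x hx hxc
      exact hc.trans_le (hA hx (ha'.trans hac.le) (le_of_lt hxc))
    · rcases eq_or_lt_of_le ha' with h0 | h0
      · filter_upwards [self_mem_nhdsWithin] with x hx
        refine lt_of_le_of_lt (hA ha hx ?_) hb
        rw [← h0]; exact hx
      obtain ⟨c, hc0, hac, hc⟩ : ∃ c, 0 ≤ c ∧ c < a ∧ deriv σ c < b := by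
        by_cases h : deriv σ 0 < b
        · exact ⟨0, le_rfl, h0, h⟩
        · obtain ⟨c, hc, hc'⟩ := sat_darboux hσ (a := 0) (b := a)
            (m := (b + deriv σ a) / 2) (by linarith) (by linarith) (by linarith)
          refine ⟨c, hc.1, lt_of_le_of_ne hc.2 ?_, by rw [hc']; linarith⟩
          rintro rfl
          linarith
      filter_upwards [self_mem_nhdsWithin, mem_nhdsWithin_of_mem_nhds (Ioi_mem_nhds hac)]
        with x hx hxc
      exact lt_of_le_of_lt (hA hc0 hx (le_of_lt hxc)) hc
  have heq : deriv σ = fun x => deriv σ |x| := by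
    funext x
    rcases abs_choice x with h | h <;> rw [h]
    rw [sat_deriv_even hσ]
  rw [heq]
  exact hon.comp_continuous continuous_abs (fun x => abs_nonneg x)

lemma sat_strict {σ : ℝ → ℝ} (hσ : IsSaturation σ) :
    ∃ ε > 0, StrictMonoOn σ (Set.Ioo (-ε) ε) := by
  obtain ⟨l, hl, h0⟩ := sat_deriv_zero hσ
  have h1 : ∀ᶠ x in nhds (0:ℝ), 0 < deriv σ x :=
    (sat_deriv_cont hσ).continuousAt.eventually (lt_mem_nhds (by rw [h0.deriv]; exact hl))
  obtain ⟨ε, hε, h⟩ := Metric.eventually_nhds_iff.1 h1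
  refine ⟨ε, hε, strictMonoOn_of_deriv_pos (convex_Ioo _ _)
    (sat_diff hσ).continuous.continuousOn ?_⟩
  intro x hx
  rw [interior_Ioo] at hx
  exact h (by rw [Real.dist_eq, sub_zero, abs_lt]; exact hx)

/-- the pairing of `z` with the unit vector of angle `θ` -/
def pr (z : E2) (θ : ℝ) : ℝ := z 0 * Real.cos θ + z 1 * Real.sin θ

lemma pr_cont : Continuous (fun q : E2 × ℝ => pr q.1 q.2) := by
  unfold pr; fun_prop

lemma exists_polar (a b : ℝ) : ∃ φ ∈ Set.Icc (-π) π, a = √(a ^ 2 + b ^ 2) * Real.cos φ ∧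
    b = √(a ^ 2 + b ^ 2) * Real.sin φ := by
  have hn : ‖(⟨a, b⟩ : ℂ)‖ = √(a ^ 2 + b ^ 2) := by
    rw [Complex.norm_eq_sqrt_sq_add_sq]
  refine ⟨Complex.arg ⟨a, b⟩, ⟨(Complex.neg_pi_lt_arg _).le, Complex.arg_le_pi _⟩, ?_, ?_⟩
  · rw [← hn, Complex.norm_mul_cos_arg]
  · rw [← hn, Complex.norm_mul_sin_arg]

lemma int_cos {σ : ℝ → ℝ} (hσ : IsSaturation σ) (r : ℝ) :
    ∫ θ in -π..π, Real.cos θ * σ (r * Real.cos θ) = 2 * π * modSat σ r := by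
  have hc : Continuous σ := (sat_diff hσ).continuous
  set h : ℝ → ℝ := fun θ => Real.cos θ * σ (r * Real.cos θ) with hh
  have hcont : Continuous h := by fun_prop
  have hper : Function.Periodic h π := by
    intro θ
    simp only [hh, Real.cos_add_pi, mul_neg, hσ.1, neg_mul, neg_neg]
  have hi : ∀ a b, IntervalIntegrable h volume a b := fun a b => hcont.intervalIntegrable a b
  have e1 : ∫ θ in -π..0, h θ = ∫ θ in -(π/2)..(π/2), h θ := by
    have := hper.intervalIntegral_add_eq (-π) (-(π/2))
    rw [show -π + π = 0 by ring, show -(π/2) + π = π/2 by ring] at this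
    exact this
  have e2 : ∫ θ in 0..π, h θ = ∫ θ in -(π/2)..(π/2), h θ := by
    have := hper.intervalIntegral_add_eq 0 (-(π/2))
    rw [show 0 + π = π by ring, show -(π/2) + π = π/2 by ring] at this
    exact this
  have e3 : ∫ θ in -(π/2)..0, h θ = ∫ θ in 0..(π/2), h θ := by
    have := intervalIntegral.integral_comp_neg (a := 0) (b := π/2) h
    rw [neg_zero] at this
    rw [← this]
    simp [hh]
  have e4 : ∫ θ in 0..(π/2), h θ = ∫ v in (0:ℝ)..(π / 2), Real.sin v * σ (r * Real.sin v) := by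
    have := intervalIntegral.integral_comp_sub_left (a := 0) (b := π/2) h (π/2)
    rw [sub_self, sub_zero] at this
    rw [← this]
    simp [hh, Real.cos_pi_div_two_sub]
  have e5 : ∫ θ in -(π/2)..(π/2), h θ = 2 * ∫ θ in 0..(π/2), h θ := by
    rw [← intervalIntegral.integral_add_adjacent_intervals (hi (-(π/2)) 0) (hi 0 (π/2)), e3]; ring
  rw [← intervalIntegral.integral_add_adjacent_intervals (hi (-π) 0) (hi 0 π), e1, e2, e5, e4,
    modSat]
  have := Real.pi_ne_zero
  generalize (∫ v in (0:ℝ)..(π / 2), Real.sin v * σ (r * Real.sin v)) = I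
  field_simp
  ring

lemma int_sin (σ : ℝ → ℝ) (r : ℝ) :
    ∫ θ in -π..π, Real.sin θ * σ (r * Real.cos θ) = 0 := by
  have := intervalIntegral.integral_comp_neg (a := -π) (b := π)
    (fun θ => Real.sin θ * σ (r * Real.cos θ))
  simp only [Real.sin_neg, Real.cos_neg, neg_mul, intervalIntegral.integral_neg, neg_neg] at this
  linarith

lemma int_shift (F : ℝ → ℝ) (hF : Function.Periodic F (2 * π)) (φ : ℝ) :
    ∫ θ in -π..π, F θ = ∫ θ in -π..π, F (θ + φ) := by
  rw [intervalIntegral.integral_comp_add_right]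
  have := hF.intervalIntegral_add_eq (-π) (-π + φ)
  rw [show -π + 2 * π = π by ring, show -π + φ + 2 * π = π + φ by ring] at this
  exact this

lemma fvec_coord {σ : ℝ → ℝ} (hσ : IsSaturation σ) (z : E2) :
    fvec σ z 0 = (1 / (2 * π)) * ∫ θ in -π..π, Real.cos θ * σ (pr z θ) ∧
    fvec σ z 1 = (1 / (2 * π)) * ∫ θ in -π..π, Real.sin θ * σ (pr z θ) := by
  have hc : Continuous σ := (sat_diff hσ).continuous
  obtain ⟨φ, -, h0, h1⟩ := exists_polar (z 0) (z 1)
  have hr : ‖z‖ = √((z 0) ^ 2 + (z 1) ^ 2) := by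
    rw [EuclideanSpace.norm_eq]; simp
  rw [← hr] at h0 h1
  set r := ‖z‖ with hrr
  have hf : fvec σ z 0 = modSat σ r * Real.cos φ ∧ fvec σ z 1 = modSat σ r * Real.sin φ := by
    by_cases hz : z = 0
    · have : r = 0 := by rw [hrr, hz, norm_zero]
      have h : modSat σ 0 = 0 := by simp [modSat, sat_zero hσ]
      rw [this, h, fvec, if_pos hz]; simp
    · have : r ≠ 0 := norm_ne_zero_iff.2 hz
      rw [fvec, if_neg hz, ← hrr]
      simp only [PiLp.smul_apply, smul_eq_mul]
      constructor
      · conv_lhs => rw [h0]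
        field_simp
      · conv_lhs => rw [h1]
        field_simp
  have hp : ∀ θ, pr z (θ + φ) = r * Real.cos θ := by
    intro θ
    rw [pr, h0, h1, Real.cos_add, Real.sin_add]
    have := Real.sin_sq_add_cos_sq φ
    linear_combination r * Real.cos θ * this
  have hper : ∀ θ, pr z (θ + 2 * π) = pr z θ := by
    intro θ; simp [pr]
  have i1 : IntervalIntegrable (fun θ => Real.cos θ * σ (r * Real.cos θ)) volume (-π) π :=
    Continuous.intervalIntegrable (by fun_prop) _ _
  have i2 : IntervalIntegrable (fun θ => Real.sin θ * σ (r * Real.cos θ)) volume (-π) π :=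
    Continuous.intervalIntegrable (by fun_prop) _ _
  have hpi := Real.pi_ne_zero
  constructor
  · rw [int_shift _ (fun θ => by simp only [hper, Real.cos_add_two_pi]) φ, hf.1]
    have : ∀ θ, Real.cos (θ + φ) * σ (pr z (θ + φ)) =
        Real.cos φ * (Real.cos θ * σ (r * Real.cos θ)) -
          Real.sin φ * (Real.sin θ * σ (r * Real.cos θ)) := by
      intro θ; rw [hp, Real.cos_add]; ring
    simp only [this]
    rw [intervalIntegral.integral_sub (i1.const_mul _) (i2.const_mul _),
      intervalIntegral.integral_const_mul, intervalIntegral.integral_const_mul,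
      int_sin, int_cos hσ]
    field_simp
    ring
  · rw [int_shift _ (fun θ => by simp only [hper, Real.sin_add_two_pi]) φ, hf.2]
    have : ∀ θ, Real.sin (θ + φ) * σ (pr z (θ + φ)) =
        Real.sin φ * (Real.cos θ * σ (r * Real.cos θ)) +
          Real.cos φ * (Real.sin θ * σ (r * Real.cos θ)) := by
      intro θ; rw [hp, Real.sin_add]; ring
    simp only [this]
    rw [intervalIntegral.integral_add (i1.const_mul _) (i2.const_mul _),
      intervalIntegral.integral_const_mul, intervalIntegral.integral_const_mul,
      int_sin, int_cos hσ]
    field_simp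
    ring

/-- `pr` as a continuous linear map in `z` -/
def prL (θ : ℝ) : E2 →L[ℝ] ℝ :=
  Real.cos θ • EuclideanSpace.proj (0 : Fin 2) + Real.sin θ • EuclideanSpace.proj (1 : Fin 2)

lemma prL_apply (θ : ℝ) (z : E2) : prL θ z = pr z θ := by
  simp [prL, pr, mul_comm]

lemma contDiff_aux {σ : ℝ → ℝ} (hσ : IsSaturation σ) (u : ℝ → ℝ) (hu : Continuous u) :
    ContDiff ℝ 1 (fun z : E2 => ∫ θ in -π..π, u θ * σ (pr z θ)) := by
  have hc : Continuous σ := (sat_diff hσ).continuous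
  have hd := sat_deriv_cont hσ
  have hpL : Continuous prL := by unfold prL; fun_prop
  have hpc := pr_cont
  set F' : E2 → ℝ → E2 →L[ℝ] ℝ := fun z θ => (u θ * deriv σ (pr z θ)) • prL θ with hF'
  have hF'c : Continuous F'.uncurry := by
    have h1 : Continuous fun q : E2 × ℝ => u q.2 * deriv σ (pr q.1 q.2) :=
      (hu.comp continuous_snd).mul (hd.comp hpc)
    exact h1.smul (hpL.comp continuous_snd)
  have hpz : ∀ z, Continuous (pr z) := fun z => hpc.comp (Continuous.prodMk_right z)
  obtain ⟨L, hL⟩ := hσ.2.1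
  have key : ∀ z : E2, HasFDerivAt (fun z : E2 => ∫ θ in -π..π, u θ * σ (pr z θ))
      (∫ θ in -π..π, F' z θ) z := by
    intro z
    refine intervalIntegral.hasFDerivAt_integral_of_dominated_of_fderiv_le
      (bound := fun θ => |u θ| * L * ‖prL θ‖) (s := Set.univ) Filter.univ_mem ?_ ?_ ?_ ?_ ?_ ?_
    · exact Eventually.of_forall fun x =>
        (hu.mul (hc.comp (hpz x))).aestronglyMeasurable
    · exact (hu.mul (hc.comp (hpz z))).intervalIntegrable _ _
    · exact (hF'c.comp (Continuous.prodMk_right z)).aestronglyMeasurable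
    · refine Eventually.of_forall fun θ _ x _ => ?_
      rw [hF', norm_smul, norm_mul]
      have : ‖deriv σ (pr x θ)‖ ≤ L := norm_deriv_le_of_lipschitz hL
      gcongr
      exact le_rfl
    · exact Continuous.intervalIntegrable (by fun_prop) _ _
    · refine Eventually.of_forall fun θ _ x _ => ?_
      have h1 : HasFDerivAt (fun z : E2 => pr z θ) (prL θ) x := by
        have := (prL θ).hasFDerivAt (x := x)
        simpa only [← prL_apply] using this
      have h2 := ((sat_diff hσ (pr x θ)).hasDerivAt.comp_hasFDerivAt x h1).const_mul (u θ)
      rw [smul_smul] at h2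
      exact h2
  rw [contDiff_one_iff_hasFDerivAt]
  exact ⟨_, intervalIntegral.continuous_parametric_intervalIntegral_of_continuous' hF'c _ _, key⟩

lemma exists_pos {σ : ℝ → ℝ} (hσ : IsSaturation σ) (z y : E2) (hy : y ≠ 0) :
    ∃ θ ∈ Set.Icc (-π) π, 0 < pr y θ * (σ (pr (z + y) θ) - σ (pr z θ)) := by
  by_cases hD : y 1 * z 0 - y 0 * z 1 = 0
  · have hN : 0 < (y 0) ^ 2 + (y 1) ^ 2 := by
      by_contra h
      apply hy
      have h0 : y 0 = 0 := by nlinarith [sq_nonneg (y 0), sq_nonneg (y 1)]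
      have h1 : y 1 = 0 := by nlinarith [sq_nonneg (y 0), sq_nonneg (y 1)]
      ext i; fin_cases i <;> simp [h0, h1]
    obtain ⟨ε, hε, hs⟩ := sat_strict hσ
    obtain ⟨φ, hφ, h0, h1⟩ := exists_polar (y 0) (y 1)
    set R := √((y 0) ^ 2 + (y 1) ^ 2)
    have hR : 0 < R := Real.sqrt_pos.2 hN
    set w : ℝ → ℝ × ℝ := fun s => (s * y 0 - y 1, s * y 1 + y 0) with hw
    set n : ℝ → ℝ := fun s => √((w s).1 ^ 2 + (w s).2 ^ 2) with hn
    have hn0 : ∀ s, 0 < n s := by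
      intro s
      apply Real.sqrt_pos.2
      simp only [hw]
      nlinarith [mul_nonneg (sq_nonneg s) hN.le]
    have hcont : ∀ a b : ℝ, y 1 * a - y 0 * b = 0 → ∀ᶠ s in nhdsWithin (0:ℝ) (Set.Ioi 0),
        (a * (w s).1 + b * (w s).2) / n s ∈ Set.Ioo (-ε) ε := by
      intro a b hab
      apply nhdsWithin_le_nhds
      have hc : ContinuousAt (fun s => (a * (w s).1 + b * (w s).2) / n s) 0 := by
        apply ContinuousAt.div
        · simp only [hw]; fun_prop
        · simp only [hn, hw]; fun_prop
        · exact (hn0 0).ne'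
      apply hc.eventually
      have : (a * (w 0).1 + b * (w 0).2) / n 0 = 0 := by
        simp only [hw]
        rw [div_eq_zero_iff]; left; linarith
      beta_reduce
      rw [this]
      exact Ioo_mem_nhds (by linarith) hε
    obtain ⟨s, ⟨hs1, hs2⟩, hs0⟩ := ((hcont (z 0) (z 1) hD).and
      (hcont (z 0 + y 0) (z 1 + y 1) (by linarith))).and self_mem_nhdsWithin |>.exists
    have hs0 : 0 < s := hs0
    obtain ⟨θ, hθ, c0, c1⟩ := exists_polar (w s).1 (w s).2
    change _ = n s * _ at c0
    change _ = n s * _ at c1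
    have hns := hn0 s
    have hpr : ∀ a : E2, pr a θ = (a 0 * (w s).1 + a 1 * (w s).2) / n s := by
      intro a
      rw [eq_div_iff hns.ne', c0, c1, pr]; ring
    have hyp : 0 < pr y θ := by
      rw [hpr]
      apply div_pos _ hns
      simp only [hw]
      nlinarith [mul_pos hs0 hN]
    have hadd : pr (z + y) θ = pr z θ + pr y θ := by simp [pr]; ring
    refine ⟨θ, hθ, mul_pos hyp (sub_pos.2 (hs ?_ ?_ ?_))⟩
    · rw [hpr]; exact hs1
    · rw [hpr]; exact hs2
    · linarith
  · obtain ⟨θ, hθ, h0, h1⟩ := exists_polar (-z 1) (z 0)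
    set R := √((-z 1) ^ 2 + (z 0) ^ 2)
    have hz : pr z θ = 0 := by
      have : z 1 = -(R * Real.cos θ) := by linarith
      rw [pr, this, h1]; ring
    have hyn : pr y θ ≠ 0 := by
      intro h
      apply hD
      have : R * pr y θ = 0 := by rw [h, mul_zero]
      rw [pr] at this
      have e : z 1 = -(R * Real.cos θ) := by linarith
      rw [e, h1]; linarith
    refine ⟨θ, hθ, ?_⟩
    have hadd : pr (z + y) θ = pr z θ + pr y θ := by simp [pr]; ring
    rw [hadd, hz, sat_zero hσ, zero_add, sub_zero, mul_comm]
    exact hσ.2.2.1 _ hyn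

lemma inner_formula {σ : ℝ → ℝ} (hσ : IsSaturation σ) (z y : E2) :
    ⟪y, fvec σ (z + y) - fvec σ z⟫ =
      (1 / (2 * π)) * ∫ θ in -π..π, pr y θ * (σ (pr (z + y) θ) - σ (pr z θ)) := by
  have hc : Continuous σ := (sat_diff hσ).continuous
  have hpz : ∀ z, Continuous (pr z) := fun z => pr_cont.comp (Continuous.prodMk_right z)
  have hi : ⟪y, fvec σ (z + y) - fvec σ z⟫ = y 0 * (fvec σ (z + y) 0 - fvec σ z 0) +
      y 1 * (fvec σ (z + y) 1 - fvec σ z 1) := by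
    simp [PiLp.inner_apply, Fin.sum_univ_two]; ring
  have ic : ∀ x : E2, IntervalIntegrable (fun θ => Real.cos θ * σ (pr x θ)) volume (-π) π :=
    fun x => (Real.continuous_cos.mul (hc.comp (hpz x))).intervalIntegrable _ _
  have is : ∀ x : E2, IntervalIntegrable (fun θ => Real.sin θ * σ (pr x θ)) volume (-π) π :=
    fun x => (Real.continuous_sin.mul (hc.comp (hpz x))).intervalIntegrable _ _
  have he : ∀ θ, pr y θ * (σ (pr (z + y) θ) - σ (pr z θ)) =
      y 0 * (Real.cos θ * σ (pr (z + y) θ) - Real.cos θ * σ (pr z θ)) +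
      y 1 * (Real.sin θ * σ (pr (z + y) θ) - Real.sin θ * σ (pr z θ)) := by
    intro θ
    rw [show pr y θ = y 0 * Real.cos θ + y 1 * Real.sin θ from rfl]; ring
  rw [hi, (fvec_coord hσ _).1, (fvec_coord hσ _).2, (fvec_coord hσ _).1, (fvec_coord hσ _).2]
  simp only [he]
  rw [intervalIntegral.integral_add (((ic _).sub (ic _)).const_mul _)
    (((is _).sub (is _)).const_mul _), intervalIntegral.integral_const_mul,
    intervalIntegral.integral_const_mul, intervalIntegral.integral_sub (ic _) (ic _),
    intervalIntegral.integral_sub (is _) (is _)]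
  ring

lemma sat_bdd {σ : ℝ → ℝ} (hσ : IsSaturation σ) : ∃ M, ∀ x, |σ x| ≤ M := by
  obtain ⟨l, hl, h⟩ := hσ.2.2.2.1
  have hm := hσ.2.2.2.2.2.1
  have hle : ∀ x, σ x ≤ l := fun x => hm.ge_of_tendsto h x
  refine ⟨l, fun x => abs_le.2 ⟨?_, hle x⟩⟩
  have := hle (-x)
  rw [hσ.1] at this
  linarith

lemma fvec_bdd {σ : ℝ → ℝ} (hσ : IsSaturation σ) : ∃ C : ℝ, ∀ z : E2, ‖fvec σ z‖ ≤ C := by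
  obtain ⟨M, hM⟩ := sat_bdd hσ
  have hM0 : 0 ≤ M := (abs_nonneg _).trans (hM 0)
  refine ⟨|2 / π| * (M * |π / 2 - 0|), fun z => ?_⟩
  by_cases hz : z = 0
  · rw [fvec, if_pos hz, norm_zero]; positivity
  · have hn : ‖z‖ ≠ 0 := norm_ne_zero_iff.2 hz
    rw [fvec, if_neg hz, norm_smul, norm_div, norm_norm, div_mul_cancel₀ _ hn, modSat, norm_mul]
    refine mul_le_mul_of_nonneg_left ?_ (abs_nonneg _)
    refine intervalIntegral.norm_integral_le_of_norm_le_const fun v _ => ?_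
    rw [norm_mul]
    calc _ ≤ 1 * M := mul_le_mul (Real.abs_sin_le_one v) (hM _) (abs_nonneg _) zero_le_one
      _ = M := one_mul M

/-- `f` is bounded, of class `C¹`, and `⟨y, f(z+y) - f(z)⟩ ≥ 0` with equality iff `y = 0`. -/
theorem stmt6 (σ : ℝ → ℝ) (hσ : IsSaturation σ) :
    (∃ C : ℝ, ∀ z : E2, ‖fvec σ z‖ ≤ C) ∧
    ContDiff ℝ 1 (fvec σ) ∧
    ∀ z y : E2,
      0 ≤ ⟪y, fvec σ (z + y) - fvec σ z⟫ ∧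
      (⟪y, fvec σ (z + y) - fvec σ z⟫ = 0 ↔ y = 0) := by
  have hc : Continuous σ := (sat_diff hσ).continuous
  have hpz : ∀ z, Continuous (pr z) := fun z => pr_cont.comp (Continuous.prodMk_right z)
  refine ⟨fvec_bdd hσ, ?_, fun z y => ?_⟩
  · rw [contDiff_euclidean]
    intro i
    fin_cases i
    · have : (fun z => fvec σ z 0) = fun z =>
          (1 / (2 * π)) * ∫ θ in -π..π, Real.cos θ * σ (pr z θ) :=
        funext fun z => (fvec_coord hσ z).1
      exact this ▸ contDiff_const.mul (contDiff_aux hσ _ Real.continuous_cos)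
    · have : (fun z => fvec σ z 1) = fun z =>
          (1 / (2 * π)) * ∫ θ in -π..π, Real.sin θ * σ (pr z θ) :=
        funext fun z => (fvec_coord hσ z).2
      exact this ▸ contDiff_const.mul (contDiff_aux hσ _ Real.continuous_sin)
  · have hnn : ∀ θ, 0 ≤ pr y θ * (σ (pr (z + y) θ) - σ (pr z θ)) := by
      intro θ
      have hadd : pr (z + y) θ = pr z θ + pr y θ := by simp [pr]; ring
      have hm := hσ.2.2.2.2.2.1
      rw [hadd]
      rcases le_total 0 (pr y θ) with h | h
      · exact mul_nonneg h (sub_nonneg.2 (hm (by linarith)))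
      · exact mul_nonneg_of_nonpos_of_nonpos h (sub_nonpos.2 (hm (by linarith)))
    have hpi := Real.pi_pos
    rw [inner_formula hσ]
    refine ⟨mul_nonneg (by positivity)
      (intervalIntegral.integral_nonneg (by linarith) fun θ _ => hnn θ), ?_, ?_⟩
    · intro h
      by_contra hy
      refine absurd h (ne_of_gt (mul_pos (by positivity) ?_))
      refine intervalIntegral.integral_pos (by linarith) ?_ (fun θ _ => hnn θ)
        (exists_pos hσ z y hy)
      exact ((hpz y).mul ((hc.comp (hpz _)).sub (hc.comp (hpz _)))).continuousOn
    · rintro rfl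
      simp
end
end

section
/- Let σ be a saturation function, S its modified saturation function, and f the associated vector field on ℝ². Then f is differentiable everywhere with Df(0) = S'(0)·I₂ and, for z≠0, Df(z) = S'(‖z‖)·zzᵀ/‖z‖² + (S(‖z‖)/‖z‖)·(I₂ − zzᵀ/‖z‖²). Moreover, for every z∈ℝ², the matrix Df(z) is symmetric positive definite. -/
open Real Filter MeasureTheory intervalIntegral RealInnerProductSpace

noncomputable section

lemma sat_diff_s7 {σ : ℝ → ℝ} (hσ : IsSaturation σ) {x : ℝ} (hx : 0 ≤ x) :
    DifferentiableAt ℝ σ x := by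
  rcases hx.eq_or_lt with rfl | hx
  · obtain ⟨l, _, h⟩ := sat_deriv_zero hσ
    exact h.differentiableAt
  · exact (hσ.2.2.2.2.2.2.1 x hx).differentiableAt (Ioi_mem_nhds hx)

lemma sat_deriv_nonneg {σ : ℝ → ℝ} (hσ : IsSaturation σ) (x : ℝ) : 0 ≤ deriv σ x :=
  hσ.2.2.2.2.2.1.deriv_nonneg

lemma sat_cont {σ : ℝ → ℝ} (hσ : IsSaturation σ) : Continuous σ := by
  obtain ⟨L, hL⟩ := hσ.2.1
  exact hL.continuous

lemma sat_pos {σ : ℝ → ℝ} (hσ : IsSaturation σ) {x : ℝ} (hx : 0 < x) : 0 < σ x :=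
  pos_of_mul_pos_left (hσ.2.2.1 x hx.ne') hx.le

lemma sat_deriv_pos {σ : ℝ → ℝ} (hσ : IsSaturation σ) :
    ∃ c > 0, ∀ x, 0 ≤ x → x ≤ c → 0 < deriv σ x := by
  obtain ⟨c, hc, hd⟩ := exists_deriv_eq_slope σ (zero_lt_one' ℝ) (sat_cont hσ).continuousOn
    (fun x hx => (sat_diff_s7 hσ hx.1.le).differentiableWithinAt)
  have hpos : 0 < deriv σ c := by
    rw [hd, sat_zero hσ]
    have := sat_pos hσ (zero_lt_one' ℝ)
    simpa using this
  refine ⟨c, hc.1, fun x hx hxc => ?_⟩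
  rcases hx.eq_or_lt with rfl | hx
  · obtain ⟨l, hl, h⟩ := sat_deriv_zero hσ
    rwa [h.deriv]
  · exact hpos.trans_le (hσ.2.2.2.2.2.2.2 hx hc.1 hxc)

lemma sat_sin_pos {v : ℝ} (h0 : 0 < v) (h1 : v ≤ π / 2) : 0 < Real.sin v :=
  Real.sin_pos_of_pos_of_lt_pi h0 (by linarith [Real.pi_pos])

lemma modSat_hasDerivAt {σ : ℝ → ℝ} (hσ : IsSaturation σ) {r : ℝ} (hr : 0 ≤ r) :
    IntervalIntegrable (fun v => Real.sin v * (deriv σ (r * Real.sin v) * Real.sin v)) volume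
      0 (π / 2) ∧
    HasDerivAt (modSat σ) ((2 / π) * ∫ v in (0:ℝ)..(π / 2),
      Real.sin v * (deriv σ (r * Real.sin v) * Real.sin v)) r := by
  obtain ⟨L, hL⟩ := hσ.2.1
  have hc := sat_cont hσ
  have key := intervalIntegral.hasDerivAt_integral_of_dominated_loc_of_lip
    (μ := volume) (a := 0) (b := π / 2) (𝕜 := ℝ)
    (F := fun ξ v => Real.sin v * σ (ξ * Real.sin v))
    (F' := fun v => Real.sin v * (deriv σ (r * Real.sin v) * Real.sin v))
    (x₀ := r) (s := Set.univ) (bound := fun _ => (L : ℝ)) Filter.univ_mem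
    (Eventually.of_forall fun ξ => (by fun_prop : Continuous fun v =>
      Real.sin v * σ (ξ * Real.sin v)).aestronglyMeasurable)
    ((by fun_prop : Continuous fun v => Real.sin v * σ (r * Real.sin v)).intervalIntegrable _ _)
    (by
      have h1 : Measurable (deriv σ) := measurable_deriv σ
      exact (by fun_prop : Measurable fun v =>
        Real.sin v * (deriv σ (r * Real.sin v) * Real.sin v)).aestronglyMeasurable)
    (Eventually.of_forall fun v _ => by
      apply LipschitzOnWith.of_dist_le_mul
      intro x _ y _
      have h := hL.dist_le_mul (x * Real.sin v) (y * Real.sin v)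
      rw [Real.dist_eq, Real.dist_eq] at h
      rw [Real.dist_eq, Real.dist_eq, ← mul_sub, abs_mul]
      rw [← sub_mul, abs_mul] at h
      have h1 := Real.abs_sin_le_one v
      have hLn : (0:ℝ) ≤ L := L.2
      have : ((Real.nnabs (L:ℝ) : NNReal) : ℝ) = L := by simp
      rw [this]
      calc |Real.sin v| * |σ (x * Real.sin v) - σ (y * Real.sin v)|
          ≤ 1 * (L * (|x - y| * 1)) := by
            refine mul_le_mul h1 (h.trans ?_) (abs_nonneg _) zero_le_one
            gcongr
        _ = L * |x - y| := by ring)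
    (by simp)
    (Eventually.of_forall fun v hv => by
      rw [Set.uIoc_of_le (by positivity)] at hv
      have hs := sat_sin_pos hv.1 hv.2
      have hd := (sat_diff_s7 hσ (mul_nonneg hr hs.le)).hasDerivAt
      have h2 : HasDerivAt (fun x : ℝ => x * Real.sin v) (Real.sin v) r := by
        simpa using (hasDerivAt_id r).mul_const (Real.sin v)
      exact (hd.comp r h2).const_mul _)
  exact ⟨key.1, key.2.const_mul _⟩

lemma modSat_deriv_pos {σ : ℝ → ℝ} (hσ : IsSaturation σ) {r : ℝ} (hr : 0 ≤ r) :
    0 < deriv (modSat σ) r := by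
  obtain ⟨hi, hd⟩ := modSat_hasDerivAt hσ hr
  rw [hd.deriv]
  refine mul_pos (by positivity) ?_
  obtain ⟨c, hc, hcp⟩ := sat_deriv_pos hσ
  have hp : 0 < π / 2 := by positivity
  set w := min (π / 2) (c / (r + 1)) with hw
  have hw0 : 0 < w := lt_min hp (by positivity)
  have hw1 : w ≤ π / 2 := min_le_left _ _
  have hw2 : r * w ≤ c := by
    have : w ≤ c / (r + 1) := min_le_right _ _
    rw [le_div_iff₀ (by positivity)] at this
    nlinarith
  have hnn : ∀ v, 0 ≤ Real.sin v * (deriv σ (r * Real.sin v) * Real.sin v) := fun v => by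
    have := mul_nonneg (sat_deriv_nonneg hσ (r * Real.sin v)) (mul_self_nonneg (Real.sin v))
    linarith
  have hi' : IntervalIntegrable (fun v => Real.sin v * (deriv σ (r * Real.sin v) * Real.sin v))
      volume 0 w := hi.mono_set (by
        rw [Set.uIcc_of_le hw0.le, Set.uIcc_of_le hp.le]
        exact Set.Icc_subset_Icc_right hw1)
  have h1 : 0 < ∫ v in (0:ℝ)..w, Real.sin v * (deriv σ (r * Real.sin v) * Real.sin v) := by
    refine intervalIntegral.intervalIntegral_pos_of_pos_on hi' (fun v hv => ?_) hw0
    have hs := sat_sin_pos hv.1 (hv.2.le.trans hw1)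
    have hsv : Real.sin v ≤ w := (Real.sin_le hv.1.le).trans hv.2.le
    have := hcp (r * Real.sin v) (by positivity)
      ((mul_le_mul_of_nonneg_left hsv hr).trans hw2)
    positivity
  exact h1.trans_le (intervalIntegral.integral_mono_interval le_rfl hw0.le hw1
    (Eventually.of_forall hnn) hi)

lemma modSat_pos {σ : ℝ → ℝ} (hσ : IsSaturation σ) {r : ℝ} (hr : 0 < r) :
    0 < modSat σ r := by
  have hc := sat_cont hσ
  refine mul_pos (by positivity) (intervalIntegral.intervalIntegral_pos_of_pos_on
    ((by fun_prop : Continuous fun v => Real.sin v * σ (r * Real.sin v)).intervalIntegrable _ _)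
    (fun v hv => ?_) (by positivity))
  have hs := sat_sin_pos hv.1 hv.2.le
  exact mul_pos hs (sat_pos hσ (mul_pos hr hs))

lemma modSat_zero {σ : ℝ → ℝ} (hσ : IsSaturation σ) : modSat σ 0 = 0 := by
  simp [modSat, sat_zero hσ]

lemma fvec_eq (σ : ℝ → ℝ) : fvec σ = fun z => (modSat σ ‖z‖ / ‖z‖) • z := by
  funext z
  by_cases h : z = 0 <;> simp [fvec, h]

lemma fvec_zero {σ : ℝ → ℝ} (hσ : IsSaturation σ) :
    HasFDerivAt (fvec σ) (deriv (modSat σ) 0 • ContinuousLinearMap.id ℝ E2) 0 := by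
  have hd := (modSat_hasDerivAt hσ le_rfl).2.differentiableAt.hasDerivAt
  rw [hasDerivAt_iff_isLittleO_nhds_zero] at hd
  rw [hasFDerivAt_iff_isLittleO_nhds_zero]
  have ht : Tendsto (fun z : E2 => ‖z‖) (nhds 0) (nhds 0) := by
    simpa using (continuous_norm (E := E2)).tendsto 0
  have h2 := (hd.comp_tendsto ht).norm_right
  refine Asymptotics.IsLittleO.of_norm_right ?_
  refine Asymptotics.IsLittleO.congr_left (Asymptotics.IsLittleO.of_norm_left
    (f' := fun z : E2 => (fvec σ (0 + z) - fvec σ 0 -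
      (deriv (modSat σ) 0 • ContinuousLinearMap.id ℝ E2) z)) ?_) (fun _ => rfl)
  have h3 := h2.norm_left
  refine (h3.congr ?_ ?_)
  · intro z
    by_cases hz : z = 0
    · subst hz
      simp [fvec, modSat_zero hσ]
    · have hn : ‖z‖ ≠ 0 := norm_ne_zero_iff.2 hz
      simp only [fvec_eq, Function.comp, zero_add, norm_zero, modSat_zero hσ, smul_zero, sub_zero,
        smul_apply, ContinuousLinearMap.id_apply, smul_eq_mul]
      rw [← sub_smul, norm_smul]
      conv_rhs => rw [← norm_norm z, ← norm_mul]
      rw [norm_norm]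
      congr 1
      field_simp
  · intro z
    simp

lemma fvec_ne {σ : ℝ → ℝ} (hσ : IsSaturation σ) {z : E2} (hz : z ≠ 0) :
    ∃ D : E2 →L[ℝ] E2, HasFDerivAt (fvec σ) D z ∧ ∀ v, D v =
        deriv (modSat σ) ‖z‖ • ((⟪z, v⟫ / ‖z‖ ^ 2) • z) +
        (modSat σ ‖z‖ / ‖z‖) • (v - (⟪z, v⟫ / ‖z‖ ^ 2) • z) := by
  have hn : ‖z‖ ≠ 0 := norm_ne_zero_iff.2 hz
  have hd := (modSat_hasDerivAt hσ (norm_nonneg z)).2.differentiableAt.hasDerivAt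
  have hg := hd.div (hasDerivAt_id ‖z‖) hn
  have hN : HasFDerivAt (fun x : E2 => ‖x‖) (‖z‖⁻¹ • innerSL ℝ z) z := by
    have h1 := (hasStrictFDerivAt_norm_sq z).hasFDerivAt.sqrt (by positivity)
    simp only [Real.sqrt_sq (norm_nonneg _)] at h1
    have h2 : (1 / (2 * ‖z‖)) • 2 • (innerSL ℝ) z = ‖z‖⁻¹ • innerSL ℝ z := by
      match_scalars
      field_simp
      try norm_num
    rw [← h2]
    exact h1
  have h := (hg.comp_hasFDerivAt z hN).smul (hasFDerivAt_id z)
  rw [fvec_eq]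
  refine ⟨_, h, fun v => ?_⟩
  simp
  match_scalars <;> field_simp
  try ring


/-- `f` is differentiable everywhere, `Df(0) = S'(0) I`, for `z ≠ 0`
`Df(z) v = S'(‖z‖) (zzᵀ/‖z‖²) v + (S(‖z‖)/‖z‖)(I - zzᵀ/‖z‖²) v`, and `Df(z)` is
symmetric positive definite for every `z`. -/
theorem stmt7 (σ : ℝ → ℝ) (hσ : IsSaturation σ) :
    (∀ z : E2, DifferentiableAt ℝ (fvec σ) z) ∧
    fderiv ℝ (fvec σ) 0 = deriv (modSat σ) 0 • ContinuousLinearMap.id ℝ E2 ∧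
    (∀ z : E2, z ≠ 0 → ∀ v : E2,
      fderiv ℝ (fvec σ) z v =
        deriv (modSat σ) ‖z‖ • ((⟪z, v⟫ / ‖z‖ ^ 2) • z) +
        (modSat σ ‖z‖ / ‖z‖) • (v - (⟪z, v⟫ / ‖z‖ ^ 2) • z)) ∧
    (∀ z v w : E2, ⟪fderiv ℝ (fvec σ) z v, w⟫ = ⟪v, fderiv ℝ (fvec σ) z w⟫) ∧
    (∀ z v : E2, v ≠ 0 → 0 < ⟪v, fderiv ℝ (fvec σ) z v⟫) := by
  have hne : ∀ z : E2, z ≠ 0 → ∀ v : E2,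
      fderiv ℝ (fvec σ) z v =
        deriv (modSat σ) ‖z‖ • ((⟪z, v⟫ / ‖z‖ ^ 2) • z) +
        (modSat σ ‖z‖ / ‖z‖) • (v - (⟪z, v⟫ / ‖z‖ ^ 2) • z) := by
    intro z hz v
    obtain ⟨D, hD, hv⟩ := fvec_ne hσ hz
    rw [hD.fderiv, hv]
  have h0 := (fvec_zero hσ).fderiv
  refine ⟨fun z => ?_, h0, hne, fun z v w => ?_, fun z v hv => ?_⟩
  · by_cases hz : z = 0
    · subst hz
      exact (fvec_zero hσ).differentiableAt
    · obtain ⟨D, hD, _⟩ := fvec_ne hσ hz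
      exact hD.differentiableAt
  · by_cases hz : z = 0
    · subst hz
      rw [h0]
      simp [inner_smul_left, inner_smul_right]
    · rw [hne z hz, hne z hz]
      simp only [inner_add_left, inner_add_right, inner_sub_left, inner_sub_right,
        real_inner_smul_left, real_inner_smul_right]
      rw [real_inner_comm z v]
      ring
  · by_cases hz : z = 0
    · subst hz
      rw [h0]
      have := modSat_deriv_pos hσ (le_refl (0:ℝ))
      have hv2 : 0 < ‖v‖ := norm_pos_iff.2 hv
      simp only [smul_apply, ContinuousLinearMap.id_apply,
        real_inner_smul_right, real_inner_self_eq_norm_sq]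
      positivity
    · rw [hne z hz]
      have hn : 0 < ‖z‖ := norm_pos_iff.2 hz
      have hv2 : 0 < ‖v‖ := norm_pos_iff.2 hv
      have hA := modSat_deriv_pos hσ hn.le
      have hB : 0 < modSat σ ‖z‖ / ‖z‖ := div_pos (modSat_pos hσ hn) hn
      simp only [inner_add_right, inner_sub_right, real_inner_smul_right,
        real_inner_self_eq_norm_sq]
      rw [real_inner_comm z v]
      set p : ℝ := ⟪z, v⟫ with hp
      have hcs : p / ‖z‖ ^ 2 * p ≤ ‖v‖ ^ 2 := by
        have h1 := abs_real_inner_le_norm z v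
        rw [div_mul_eq_mul_div, div_le_iff₀ (by positivity)]
        have h2 := abs_mul_abs_self p
        nlinarith [abs_nonneg p]
      by_cases hp0 : p = 0
      · rw [hp0]
        simp only [zero_div, zero_mul, mul_zero, zero_add, sub_zero]
        positivity
      · have h1 : 0 < p / ‖z‖ ^ 2 * p := by
          rw [div_mul_eq_mul_div]
          exact div_pos (mul_self_pos.2 hp0) (by positivity)
        have h2 := mul_nonneg hB.le (sub_nonneg.2 hcs)
        have h3 := mul_pos hA h1
        linarith
end
end

section
/- Let σ be a saturation function and V₀(z,y) = ‖y‖² + ∫₀^{‖z‖} S(ξ)dξ + ∫₀^{‖z−y‖} S(ξ)dξ. There exist ε₀>0, R>0, C₁>0 and ρ∈(0,1) such that for every ε∈(0,ε₀) and every (z₀,y₀)∈ℝ²×ℝ² with V₀(z₀,y₀) ≥ R, there exists a time T(z₀,y₀) with ρ·max(1,‖y₀‖) ≤ T(z₀,y₀) ≤ 2ρ·max(1,‖y₀‖) such that, along every solution (z(t),y(t)) of (T_ε) with (z(0),y(0)) = (z₀,y₀), one has V₀(z(T(z₀,y₀)),y(T(z₀,y₀))) − V₀(z₀,y₀) ≤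 −C₁·T(z₀,y₀). -/
open Real Filter MeasureTheory intervalIntegral RealInnerProductSpace

noncomputable section

/-- The Lyapunov function `V₀(z,y) = ‖y‖² + ∫₀^{‖z‖} S + ∫₀^{‖z-y‖} S`. -/
def V0 (σ : ℝ → ℝ) (z y : E2) : ℝ :=
  ‖y‖ ^ 2 + (∫ ξ in (0:ℝ)..‖z‖, modSat σ ξ) + ∫ ξ in (0:ℝ)..‖z - y‖, modSat σ ξ

/-- `(z, y)` solves the time-varying system `(T_ε)`:
`ż = y - b_ε(t) σ(b_ε(t)ᵀ z)`, `ẏ = - b_ε(t) σ(b_ε(t)ᵀ z)`, for `t ≥ 0`. -/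
def IsSolTeps (σ : ℝ → ℝ) (ε : ℝ) (z y : ℝ → E2) : Prop :=
  ∀ t : ℝ, 0 ≤ t →
    HasDerivAt z (y t - σ ⟪bvp ε t, z t⟫ • bvp ε t) t ∧
    HasDerivAt y (-(σ ⟪bvp ε t, z t⟫) • bvp ε t) t

/-! ### Preliminaries -/

/-- The working hypotheses extracted from `IsSaturation`. -/
structure SD (σ : ℝ → ℝ) (A L : ℝ) : Prop where
  A_pos : 0 < A
  L_nonneg : 0 ≤ L
  odd : ∀ x, σ (-x) = -σ x
  bdd : ∀ x, |σ x| ≤ A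
  lip : ∀ x y, |σ x - σ y| ≤ L * |x - y|
  mono : Monotone σ
  diff : Differentiable ℝ σ
  pos : ∀ x, 0 < x → 0 < σ x

lemma exists_SD {σ : ℝ → ℝ} (h : IsSaturation σ) : ∃ A L, SD σ A L := by
  obtain ⟨hodd, ⟨L, hL⟩, hpos, ⟨l, hl, hlim⟩, ⟨l', hl', hlim'⟩, hmono, hdiff, -⟩ := h
  have h0 : σ 0 = 0 := by have := hodd 0; simp at this; linarith
  have hub : ∀ x, σ x ≤ l := fun x => hmono.ge_of_tendsto hlim x
  refine ⟨l, L, hl, L.2, hodd, ?_, ?_, hmono, ?_, ?_⟩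
  · intro x
    rw [abs_le]
    refine ⟨?_, hub x⟩
    have := hub (-x); rw [hodd] at this; linarith
  · intro x y
    have := hL.dist_le_mul x y
    simpa [Real.dist_eq] using this
  · intro x
    rcases lt_trichotomy x 0 with hx | hx | hx
    · have h1 : DifferentiableAt ℝ σ (-x) :=
        (hdiff (-x) (by simpa using hx)).differentiableAt (Ioi_mem_nhds (by linarith))
      have h2 : σ = fun x => - σ (-x) := by funext x; rw [hodd]; ring
      rw [h2]
      exact (DifferentiableAt.comp x h1 differentiableAt_id.neg).neg
    · subst hx
      have : HasDerivAt σ l' 0 := by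
        rw [hasDerivAt_iff_tendsto_slope]
        refine hlim'.congr fun y => ?_
        simp [slope_def_field, h0]
      exact this.differentiableAt
    · exact (hdiff x hx).differentiableAt (Ioi_mem_nhds hx)
  · intro x hx
    have := hpos x hx.ne'
    exact pos_of_mul_pos_left this hx.le

/-- Differentiation under the integral sign at a single point. -/
lemma key_deriv {E : Type*} [NormedAddCommGroup E] [NormedSpace ℝ E] [CompleteSpace E]
    {g : ℝ → ℝ → E} {g' : ℝ → E} {t₀ a b K : ℝ} (hab : a ≤ b)
    (hc : ∀ t, Continuous (g t)) (hd : ∀ s, HasDerivAt (fun t => g t s) (g' s) t₀)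
    (hl : ∀ᶠ t in nhds t₀, ∀ s ∈ Set.Icc a b, ‖g t s - g t₀ s‖ ≤ K * ‖t - t₀‖) :
    HasDerivAt (fun t => ∫ s in a..b, g t s) (∫ s in a..b, g' s) t₀ := by
  simp only [intervalIntegral.integral_of_le hab]
  have hmeas : AEStronglyMeasurable g' (volume.restrict (Set.Ioc a b)) := by
    have hseq : ∀ s, Tendsto (fun n : ℕ => ((n:ℝ)+1) • (g (t₀ + 1 / ((n:ℝ)+1)) s - g t₀ s)) atTop
        (nhds (g' s)) := by
      intro s
      have h1 := (hd s).tendsto_slope_zero_right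
      have h2 : Tendsto (fun n : ℕ => 1 / ((n:ℝ)+1)) atTop (nhdsWithin 0 (Set.Ioi 0)) := by
        refine tendsto_nhdsWithin_iff.2 ⟨tendsto_one_div_add_atTop_nhds_zero_nat, ?_⟩
        filter_upwards with n
        exact Set.mem_Ioi.2 (by positivity)
      refine (h1.comp h2).congr fun n => ?_
      simp
    refine aestronglyMeasurable_of_tendsto_ae atTop (fun n => ?_)
      (Filter.Eventually.of_forall hseq)
    exact (((hc _).sub (hc _)).const_smul _).aestronglyMeasurable
  have hgint : Integrable (g t₀) (volume.restrict (Set.Ioc a b)) :=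
    ((hc t₀).integrableOn_Ioc)
  have := hasFDerivAt_integral_of_dominated_loc_of_lip' (𝕜 := ℝ) (F := g) (x₀ := t₀)
    (F' := fun s => ContinuousLinearMap.toSpanSingleton ℝ (g' s))
    (bound := fun _ => K) (μ := volume.restrict (Set.Ioc a b)) hl
    (fun x _ => (hc x).aestronglyMeasurable) hgint
    (by
      exact (ContinuousLinearMap.toSpanSingletonCLE (𝕜 := ℝ) (E := E)).continuous.comp_aestronglyMeasurable hmeas)
    (by
      filter_upwards [ae_restrict_mem measurableSet_Ioc] with s hs
      intro t ht
      exact ht s ⟨hs.1.le, hs.2⟩)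
    (by simp)
    (Filter.Eventually.of_forall fun s => (hd s).hasFDerivAt)
  have h2 := this.2.hasDerivAt
  convert h2 using 1
  rw [ContinuousLinearMap.integral_apply this.1]
  simp

/-- the unit circle -/
def bet (s : ℝ) : E2 := Real.sin s • !₂[(1:ℝ), 0] + Real.cos s • !₂[(0:ℝ), 1]

/-- its derivative -/
def bet' (s : ℝ) : E2 := Real.cos s • !₂[(1:ℝ), 0] + (-Real.sin s) • !₂[(0:ℝ), 1]

lemma bvp_eq (ε t : ℝ) : bvp ε t = bet (2 * Real.pi / ε * t) := by
  have : 2 * Real.pi * t / ε = 2 * Real.pi / ε * t := by ring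
  ext i
  fin_cases i <;> simp [bvp, bet, this]

lemma bet_inner (s : ℝ) (v : E2) : ⟪bet s, v⟫ = Real.sin s * v 0 + Real.cos s * v 1 := by
  simp [bet, inner_add_left, inner_smul_left, PiLp.inner_apply]

lemma bet_norm (s : ℝ) : ‖bet s‖ = 1 := by
  rw [EuclideanSpace.norm_eq]
  simp [bet]

lemma bet'_norm (s : ℝ) : ‖bet' s‖ = 1 := by
  rw [EuclideanSpace.norm_eq]
  simp [bet']

lemma bet_hasDerivAt (s : ℝ) : HasDerivAt bet (bet' s) s := by
  unfold bet bet'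
  exact ((Real.hasDerivAt_sin s).smul_const _).add ((Real.hasDerivAt_cos s).smul_const _)

@[fun_prop]
lemma bet_cont : Continuous bet := by unfold bet; fun_prop

@[fun_prop]
lemma bet'_cont : Continuous bet' := by unfold bet'; fun_prop

lemma bet_periodic (s : ℝ) : bet (s + 2 * Real.pi) = bet s := by
  simp [bet]

lemma bet_lip (s t : ℝ) : ‖bet s - bet t‖ ≤ |s - t| := by
  have := Convex.norm_image_sub_le_of_norm_hasDerivWithin_le (f := bet) (f' := bet') (C := 1)
    (s := Set.univ) (fun x _ => (bet_hasDerivAt x).hasDerivWithinAt)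
    (fun x _ => (bet'_norm x).le) convex_univ (Set.mem_univ t) (Set.mem_univ s)
  simpa using this

lemma inner_bet_le (s : ℝ) (v : E2) : |⟪bet s, v⟫| ≤ ‖v‖ := by
  have := abs_real_inner_le_norm (bet s) v
  rwa [bet_norm, one_mul] at this

lemma shift_int {E : Type*} [NormedAddCommGroup E] [NormedSpace ℝ E] (g : E2 → E) (θ : ℝ) :
    ∫ s in (0:ℝ)..(2 * Real.pi), g (bet (θ + s)) = ∫ s in (0:ℝ)..(2 * Real.pi), g (bet s) := by
  have hp : Function.Periodic (fun s => g (bet s)) (2 * Real.pi) := fun s => by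
    simp [bet_periodic]
  have h := hp.intervalIntegral_add_eq θ 0
  rw [intervalIntegral.integral_comp_add_left (fun s => g (bet s)) θ]
  simpa using h

lemma two_pi_nonneg : (0:ℝ) ≤ 2 * Real.pi := by positivity

lemma int_sq (v : E2) : ∫ s in (0:ℝ)..(2 * Real.pi), ⟪bet s, v⟫ ^ 2 = Real.pi * ‖v‖ ^ 2 := by
  have h : ∀ s, ⟪bet s, v⟫ ^ 2 = (v 0)^2 * Real.sin s ^ 2 + (v 1)^2 * Real.cos s ^ 2
      + 2 * v 0 * v 1 * (Real.sin s * Real.cos s) := by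
    intro s; rw [bet_inner]; ring
  simp only [h]
  rw [intervalIntegral.integral_add, intervalIntegral.integral_add,
    intervalIntegral.integral_const_mul, intervalIntegral.integral_const_mul,
    intervalIntegral.integral_const_mul, integral_sin_sq, integral_cos_sq, integral_sin_mul_cos₁]
  · simp [EuclideanSpace.norm_sq_eq, Fin.sum_univ_two]; ring
  all_goals exact Continuous.intervalIntegrable (by fun_prop) _ _

/-! ### The averaged field and its potential -/

/-- The averaged vector field. -/
def Fm (σ : ℝ → ℝ) (z : E2) : E2 :=
  (2 * Real.pi)⁻¹ • ∫ s in (0:ℝ)..(2 * Real.pi), σ ⟪bet s, z⟫ • bet s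

/-- Its directional derivative. -/
def DF (σ : ℝ → ℝ) (z v : E2) : E2 :=
  (2 * Real.pi)⁻¹ • ∫ s in (0:ℝ)..(2 * Real.pi), (deriv σ ⟪bet s, z⟫ * ⟪bet s, v⟫) • bet s

/-- Its potential. -/
def Ph (σ : ℝ → ℝ) (z : E2) : ℝ :=
  (2 * Real.pi)⁻¹ * ∫ s in (0:ℝ)..(2 * Real.pi), ∫ x in (0:ℝ)..⟪bet s, z⟫, σ x

section
variable {σ : ℝ → ℝ} {A L : ℝ}

lemma SD.cont (h : SD σ A L) : Continuous σ := h.diff.continuous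

lemma SD.zero (h : SD σ A L) : σ 0 = 0 := by have := h.odd 0; simp at this; linarith

lemma SD.d_nonneg (h : SD σ A L) (x : ℝ) : 0 ≤ deriv σ x := h.mono.deriv_nonneg

lemma SD.d_le (h : SD σ A L) (x : ℝ) : deriv σ x ≤ L := by
  have h1 : LipschitzWith ⟨L, h.L_nonneg⟩ σ := LipschitzWith.of_dist_le_mul fun x y => by
    simp only [Real.dist_eq]
    exact h.lip x y
  have := norm_deriv_le_of_lipschitz h1 (x₀ := x)
  exact (le_abs_self _).trans this

lemma SD.d_int (h : SD σ A L) {q : ℝ → ℝ} (hq : Continuous q) (a b : ℝ) :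
    IntervalIntegrable (fun s => deriv σ (q s)) volume a b := by
  have : IntervalIntegrable (fun _ => L) volume a b := by simp
  refine this.mono_fun ?_ ?_
  · exact ((measurable_deriv σ).comp hq.measurable).aestronglyMeasurable
  · filter_upwards with s
    rw [Real.norm_of_nonneg (h.d_nonneg _), Real.norm_of_nonneg h.L_nonneg]
    exact h.d_le _

lemma SD.prim_deriv (h : SD σ A L) (x : ℝ) : HasDerivAt (fun x => ∫ u in (0:ℝ)..x, σ u) (σ x) x :=
  intervalIntegral.integral_hasDerivAt_right (h.cont.intervalIntegrable _ _)
    h.cont.stronglyMeasurable.stronglyMeasurableAtFilter h.cont.continuousAt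

lemma SD.prim_cont (h : SD σ A L) : Continuous (fun x => ∫ u in (0:ℝ)..x, σ u) :=
  continuous_iff_continuousAt.2 fun x => (h.prim_deriv x).continuousAt

lemma SD.prim_lip (h : SD σ A L) (x y : ℝ) :
    |(∫ u in (0:ℝ)..x, σ u) - ∫ u in (0:ℝ)..y, σ u| ≤ A * |x - y| := by
  have := Convex.norm_image_sub_le_of_norm_hasDerivWithin_le
    (f := fun x => ∫ u in (0:ℝ)..x, σ u) (f' := σ) (C := A)
    (s := Set.univ) (fun x _ => (h.prim_deriv x).hasDerivWithinAt)
    (fun x _ => h.bdd x) convex_univ (Set.mem_univ y) (Set.mem_univ x)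
  simpa using this

lemma avg_inner (g : ℝ → ℝ) (hg : IntervalIntegrable g volume 0 (2 * Real.pi)) (v : E2) :
    ⟪v, (2 * Real.pi)⁻¹ • ∫ s in (0:ℝ)..(2 * Real.pi), g s • bet s⟫
      = (2 * Real.pi)⁻¹ * ∫ s in (0:ℝ)..(2 * Real.pi), g s * ⟪bet s, v⟫ := by
  have hi : IntervalIntegrable (fun s => g s • bet s) volume 0 (2 * Real.pi) :=
    hg.smul_continuousOn bet_cont.continuousOn
  have := ContinuousLinearMap.intervalIntegral_comp_comm (innerSL ℝ v) hi
  rw [inner_smul_right]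
  congr 1
  simp only [innerSL_apply_apply] at this
  rw [← this]
  refine intervalIntegral.integral_congr fun s _ => ?_
  simp only [inner_smul_right]
  rw [real_inner_comm]

lemma avg_norm (g : ℝ → ℝ) :
    ‖(2 * Real.pi)⁻¹ • ∫ s in (0:ℝ)..(2 * Real.pi), g s • bet s‖
      ≤ (2 * Real.pi)⁻¹ * ∫ s in (0:ℝ)..(2 * Real.pi), |g s| := by
  rw [norm_smul, Real.norm_of_nonneg (by positivity)]
  gcongr
  refine (intervalIntegral.norm_integral_le_integral_norm two_pi_nonneg).trans (le_of_eq ?_)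
  refine intervalIntegral.integral_congr fun s _ => ?_
  simp [norm_smul, bet_norm]

lemma SD.Fm_inner (h : SD σ A L) (z v : E2) :
    ⟪v, Fm σ z⟫ = (2 * Real.pi)⁻¹ * ∫ s in (0:ℝ)..(2 * Real.pi), σ ⟪bet s, z⟫ * ⟪bet s, v⟫ := by
  have := h.cont
  exact avg_inner _ (Continuous.intervalIntegrable (by fun_prop) _ _) v

lemma SD.DF_inner (h : SD σ A L) (z x v : E2) :
    ⟪v, DF σ z x⟫ = (2 * Real.pi)⁻¹ *
      ∫ s in (0:ℝ)..(2 * Real.pi), deriv σ ⟪bet s, z⟫ * ⟪bet s, x⟫ * ⟪bet s, v⟫ := by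
  refine avg_inner _ ?_ v
  exact (h.d_int (by fun_prop) _ _).mul_continuousOn (by fun_prop)

/-- averages of bounded functions are bounded -/
lemma avg_le {g : ℝ → ℝ} {K : ℝ} (hg : IntervalIntegrable g volume 0 (2 * Real.pi))
    (hK : ∀ s, g s ≤ K) : (2 * Real.pi)⁻¹ * ∫ s in (0:ℝ)..(2 * Real.pi), g s ≤ K := by
  have := intervalIntegral.integral_mono (μ := volume) (g := fun _ => K) two_pi_nonneg hg (by simp) hK
  rw [intervalIntegral.integral_const] at this
  rw [inv_mul_le_iff₀ (by positivity)]
  simpa using this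

lemma SD.Fm_norm (h : SD σ A L) (z : E2) : ‖Fm σ z‖ ≤ A := by
  have := h.cont
  refine (avg_norm _).trans (avg_le (Continuous.intervalIntegrable (by fun_prop) _ _) fun s => h.bdd _)

lemma curve_lip {E : Type*} [NormedAddCommGroup E] [NormedSpace ℝ E] {x : ℝ → E} {x' : E} {t : ℝ}
    (hx : HasDerivAt x x' t) : ∃ K, 0 ≤ K ∧ ∀ᶠ r in nhds t, ‖x r - x t‖ ≤ K * ‖r - t‖ := by
  obtain ⟨K, hK, hb⟩ := hx.isBigO_sub.exists_nonneg
  exact ⟨K, hK, hb.bound⟩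

lemma SD.Fm_deriv (h : SD σ A L) {x : ℝ → E2} {x' : E2} {t : ℝ} (hx : HasDerivAt x x' t) :
    HasDerivAt (fun t => Fm σ (x t)) (DF σ (x t) x') t := by
  unfold Fm DF
  have hcont := h.cont
  obtain ⟨K, hK, hlip⟩ := curve_lip hx
  refine HasDerivAt.const_smul (F := E2) (2 * Real.pi)⁻¹ ?_
  refine key_deriv (K := L * K) two_pi_nonneg ?_ ?_ ?_
  · intro t
    fun_prop
  · intro s
    have h1 : HasDerivAt (fun t => ⟪bet s, x t⟫) ⟪bet s, x'⟫ t := by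
      simpa using (hasDerivAt_const t (bet s)).inner ℝ hx
    exact ((h.diff _).hasDerivAt.comp t h1).smul_const (bet s)
  · filter_upwards [hlip] with r hr s _
    rw [← sub_smul, norm_smul, bet_norm, mul_one]
    refine (h.lip _ _).trans ?_
    rw [← inner_sub_right, mul_assoc]
    exact mul_le_mul_of_nonneg_left ((inner_bet_le _ _).trans hr) h.L_nonneg

lemma SD.Ph_deriv (h : SD σ A L) {x : ℝ → E2} {x' : E2} {t : ℝ} (hx : HasDerivAt x x' t) :
    HasDerivAt (fun t => Ph σ (x t)) ⟪x', Fm σ (x t)⟫ t := by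
  rw [h.Fm_inner]
  unfold Ph
  have hcont := h.prim_cont
  obtain ⟨K, hK, hlip⟩ := curve_lip hx
  refine HasDerivAt.const_mul _ (key_deriv (K := A * K) two_pi_nonneg ?_ ?_ ?_)
  · intro t
    exact hcont.comp (by fun_prop : Continuous fun s => ⟪bet s, x t⟫)
  · intro s
    have h1 : HasDerivAt (fun t => ⟪bet s, x t⟫) ⟪bet s, x'⟫ t := by
      simpa using (hasDerivAt_const t (bet s)).inner ℝ hx
    exact ((h.prim_deriv _).comp t h1)
  · filter_upwards [hlip] with r hr s _
    refine (h.prim_lip _ _).trans ?_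
    rw [← inner_sub_right, mul_assoc]
    exact mul_le_mul_of_nonneg_left ((inner_bet_le _ _).trans hr) h.A_pos.le

/-- `S` as an average over the full circle. -/
lemma SD.modSat_eq (h : SD σ A L) (r : ℝ) :
    modSat σ r = (2 * Real.pi)⁻¹ *
      ∫ s in (0:ℝ)..(2 * Real.pi), σ (r * Real.sin s) * Real.sin s := by
  have hcont := h.cont
  set g : ℝ → ℝ := fun s => σ (r * Real.sin s) * Real.sin s with hg
  have hgc : Continuous g := by fun_prop
  have i : ∀ a b, IntervalIntegrable g volume a b := fun a b => hgc.intervalIntegrable a b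
  have e1 : ∫ s in (Real.pi/2)..Real.pi, g s = ∫ s in (0:ℝ)..(Real.pi/2), g s := by
    have := intervalIntegral.integral_comp_sub_left (a := 0) (b := Real.pi/2) g Real.pi
    have h2 : ∀ s, g (Real.pi - s) = g s := fun s => by simp [hg]
    simp only [h2] at this
    rw [this]; congr 1 <;> ring
  have e2 : ∫ s in Real.pi..(2*Real.pi), g s = ∫ s in (0:ℝ)..Real.pi, g s := by
    have := intervalIntegral.integral_comp_add_right (a := 0) (b := Real.pi) g Real.pi
    have h2 : ∀ s, g (s + Real.pi) = g s := fun s => by simp [hg, h.odd]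
    simp only [h2] at this
    rw [this]; congr 1 <;> ring
  have e3 := intervalIntegral.integral_add_adjacent_intervals (i 0 (Real.pi/2)) (i (Real.pi/2) Real.pi)
  have e4 := intervalIntegral.integral_add_adjacent_intervals (i 0 (Real.pi)) (i (Real.pi) (2*Real.pi))
  rw [← e4, e2, ← e3, e1]
  unfold modSat
  have : ∀ v, Real.sin v * σ (r * Real.sin v) = g v := fun v => by rw [hg]; ring
  simp only [this]
  have := Real.pi_pos
  field_simp
  ring

lemma SD.modSat_cont (h : SD σ A L) : Continuous (modSat σ) := by
  have := h.cont
  unfold modSat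
  refine continuous_const.mul ?_
  exact intervalIntegral.continuous_parametric_intervalIntegral_of_continuous' (by fun_prop) _ _

lemma SD.radial0 (h : SD σ A L) (r : ℝ) : ∫ ξ in (0:ℝ)..r, modSat σ ξ =
    (2 * Real.pi)⁻¹ * ∫ s in (0:ℝ)..(2 * Real.pi), ∫ x in (0:ℝ)..(r * Real.sin s), σ x := by
  have hd : ∀ r, HasDerivAt (fun r => (2 * Real.pi)⁻¹ *
      ∫ s in (0:ℝ)..(2 * Real.pi), ∫ x in (0:ℝ)..(r * Real.sin s), σ x) (modSat σ r) r := by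
    intro r
    rw [h.modSat_eq]
    have hcont := h.prim_cont
    refine HasDerivAt.const_mul _ (key_deriv (K := A) two_pi_nonneg ?_ ?_ ?_)
    · intro t
      exact hcont.comp (by fun_prop : Continuous fun s => t * Real.sin s)
    · intro s
      exact ((h.prim_deriv _).comp r (hasDerivAt_mul_const (Real.sin s)))
    · filter_upwards with t s _
      refine (h.prim_lip _ _).trans ?_
      rw [← sub_mul, abs_mul]
      refine mul_le_mul_of_nonneg_left ?_ h.A_pos.le
      exact mul_le_of_le_one_right (abs_nonneg _) (Real.abs_sin_le_one s)
  have := intervalIntegral.integral_eq_sub_of_hasDerivAt (a := 0) (b := r) (fun x _ => hd x)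
    (h.modSat_cont.intervalIntegrable _ _)
  rw [this]
  simp

lemma SD.radial (h : SD σ A L) (z : E2) : ∫ ξ in (0:ℝ)..‖z‖, modSat σ ξ = Ph σ z := by
  rw [h.radial0]
  unfold Ph
  congr 1
  set c : ℂ := ⟨z 0, z 1⟩ with hc
  have hn : ‖z‖ = ‖c‖ := by
    rw [EuclideanSpace.norm_eq, Complex.norm_eq_sqrt_sq_add_sq]
    simp [Fin.sum_univ_two, hc]
  have h0 : z 0 = ‖z‖ * Real.cos c.arg := by rw [hn, Complex.norm_mul_cos_arg]
  have h1 : z 1 = ‖z‖ * Real.sin c.arg := by rw [hn, Complex.norm_mul_sin_arg]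
  have h2 : ∀ s, ⟪bet s, z⟫ = ‖z‖ * Real.sin (c.arg + s) := by
    intro s
    rw [bet_inner, Real.sin_add]
    conv_lhs => rw [h0, h1]
    ring
  simp only [h2]
  have := shift_int (fun b : E2 => ∫ x in (0:ℝ)..(‖z‖ * b 0), σ x) c.arg
  have h3 : ∀ s, (bet s) 0 = Real.sin s := fun s => by simp [bet]
  simp only [h3] at this
  exact this.symm

lemma SD.V0_eq (h : SD σ A L) (z y : E2) : V0 σ z y = ‖y‖ ^ 2 + Ph σ z + Ph σ (z - y) := by
  unfold V0
  rw [h.radial, h.radial]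

end

/-! ### The corrector -/

/-- The corrector of the averaging argument. -/
def Wc (σ : ℝ → ℝ) (θ : ℝ) (w z : E2) : ℝ :=
  ∫ s in (0:ℝ)..(2 * Real.pi), s / (2 * Real.pi) * (⟪bet (θ + s), w⟫ * σ ⟪bet (θ + s), z⟫)

/-- The remainder term in the derivative of the corrector. -/
def Bc (σ : ℝ → ℝ) (θ : ℝ) (w z w' z' : E2) : ℝ :=
  ∫ s in (0:ℝ)..(2 * Real.pi), s / (2 * Real.pi) * (⟪bet (θ + s), w'⟫ * σ ⟪bet (θ + s), z⟫
    + ⟪bet (θ + s), w⟫ * (deriv σ ⟪bet (θ + s), z⟫ * ⟪bet (θ + s), z'⟫))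

section
variable {σ : ℝ → ℝ} {A L : ℝ}

lemma SD.parts (h : SD σ A L) (θ : ℝ) (w z : E2) :
    ∫ s in (0:ℝ)..(2 * Real.pi), s / (2 * Real.pi) * (⟪bet' (θ + s), w⟫ * σ ⟪bet (θ + s), z⟫
      + ⟪bet (θ + s), w⟫ * (deriv σ ⟪bet (θ + s), z⟫ * ⟪bet' (θ + s), z⟫))
    = ⟪bet θ, w⟫ * σ ⟪bet θ, z⟫ - ⟪w, Fm σ z⟫ := by
  have hcont := h.cont
  have hb : ∀ s, HasDerivAt (fun s => bet (θ + s)) (bet' (θ + s)) s := fun s => by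
    simpa using (bet_hasDerivAt (θ + s)).comp_const_add θ s
  have hi : ∀ (v : E2) s, HasDerivAt (fun s => ⟪bet (θ + s), v⟫) ⟪bet' (θ + s), v⟫ s := fun v s => by
    simpa using (hb s).inner ℝ (hasDerivAt_const s v)
  have := intervalIntegral.integral_mul_deriv_eq_deriv_mul (a := 0) (b := 2 * Real.pi)
    (u := fun s => s / (2 * Real.pi)) (u' := fun _ => 1 / (2 * Real.pi))
    (v := fun s => ⟪bet (θ + s), w⟫ * σ ⟪bet (θ + s), z⟫)
    (v' := fun s => ⟪bet' (θ + s), w⟫ * σ ⟪bet (θ + s), z⟫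
      + ⟪bet (θ + s), w⟫ * (deriv σ ⟪bet (θ + s), z⟫ * ⟪bet' (θ + s), z⟫))
    (fun s _ => (hasDerivAt_id s).div_const _)
    (fun s _ => (hi w s).mul ((h.diff _).hasDerivAt.comp s (hi z s)))
    (by simp)
    (by
      refine IntervalIntegrable.add (Continuous.intervalIntegrable (by fun_prop) _ _) ?_
      refine IntervalIntegrable.continuousOn_mul ?_ (by fun_prop)
      exact (h.d_int (by fun_prop) _ _).mul_continuousOn (by fun_prop))
  rw [this, h.Fm_inner, intervalIntegral.integral_const_mul]
  have e := shift_int (fun b : E2 => ⟪b, w⟫ * σ ⟪b, z⟫) θ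
  rw [e]
  have hpi := Real.pi_pos.ne'
  simp only [bet_periodic, zero_div, zero_mul, sub_zero, one_div]
  rw [div_self (by positivity), one_mul]
  congr 2
  refine intervalIntegral.integral_congr fun s _ => ?_
  simp only [mul_comm]

lemma SD.Wc_deriv (h : SD σ A L) {ω t : ℝ} {w z : ℝ → E2} {w' z' : E2}
    (hw : HasDerivAt w w' t) (hz : HasDerivAt z z' t) :
    HasDerivAt (fun t => Wc σ (ω * t) (w t) (z t))
      (ω * (⟪bet (ω * t), w t⟫ * σ ⟪bet (ω * t), z t⟫ - ⟪w t, Fm σ (z t)⟫)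
        + Bc σ (ω * t) (w t) (z t) w' z') t := by
  have hcont := h.cont
  have hL := h.L_nonneg
  have hA := h.A_pos
  rw [← h.parts, Bc, ← intervalIntegral.integral_const_mul, ← intervalIntegral.integral_add]
  rotate_left
  · refine IntervalIntegrable.const_mul ?_ _
    refine IntervalIntegrable.continuousOn_mul ?_ (by fun_prop)
    refine IntervalIntegrable.add (Continuous.intervalIntegrable (by fun_prop) _ _) ?_
    refine IntervalIntegrable.continuousOn_mul ?_ (by fun_prop)
    exact (h.d_int (by fun_prop) _ _).mul_continuousOn (by fun_prop)
  · refine IntervalIntegrable.continuousOn_mul ?_ (by fun_prop)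
    refine IntervalIntegrable.add (Continuous.intervalIntegrable (by fun_prop) _ _) ?_
    refine IntervalIntegrable.continuousOn_mul ?_ (by fun_prop)
    exact (h.d_int (by fun_prop) _ _).mul_continuousOn (by fun_prop)
  unfold Wc
  obtain ⟨K₁, hK₁, hl₁⟩ := curve_lip hw
  obtain ⟨K₂, hK₂, hl₂⟩ := curve_lip hz
  -- increments of inner products
  have hinc : ∀ (x : ℝ → E2) (K r s : ℝ), ‖x r - x t‖ ≤ K * ‖r - t‖ →
      |⟪bet (ω * r + s), x r⟫ - ⟪bet (ω * t + s), x t⟫| ≤ (K + |ω| * ‖x t‖) * ‖r - t‖ := by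
    intro x K r s hx
    have e : ⟪bet (ω * r + s), x r⟫ - ⟪bet (ω * t + s), x t⟫
        = ⟪bet (ω * r + s), x r - x t⟫ + ⟪bet (ω * r + s) - bet (ω * t + s), x t⟫ := by
      rw [inner_sub_right, inner_sub_left]; ring
    rw [e]
    refine (abs_add_le _ _).trans ?_
    have h1 := (inner_bet_le (ω * r + s) (x r - x t)).trans hx
    have h2 := abs_real_inner_le_norm (bet (ω * r + s) - bet (ω * t + s)) (x t)
    have h3 : ‖bet (ω * r + s) - bet (ω * t + s)‖ ≤ |ω| * ‖r - t‖ := by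
      refine (bet_lip _ _).trans (le_of_eq ?_)
      rw [Real.norm_eq_abs, ← abs_mul]; congr 1; ring
    have h4 := mul_le_mul_of_nonneg_right h3 (norm_nonneg (x t))
    linarith
  refine key_deriv (K := (K₁ + |ω| * ‖w t‖) * A + ‖w t‖ * (L * (K₂ + |ω| * ‖z t‖)))
    two_pi_nonneg ?_ ?_ ?_
  · intro t
    fun_prop
  · intro s
    have hb : HasDerivAt (fun t => bet (ω * t + s)) (ω • bet' (ω * t + s)) t := by
      have h1 : HasDerivAt (fun t => ω * t + s) ω t := by
        simpa using ((hasDerivAt_id t).const_mul ω).add_const s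
      exact (bet_hasDerivAt (ω * t + s)).scomp t h1
    have hi : ∀ {x : ℝ → E2} {x' : E2}, HasDerivAt x x' t →
        HasDerivAt (fun t => ⟪bet (ω * t + s), x t⟫)
          (⟪bet (ω * t + s), x'⟫ + ω * ⟪bet' (ω * t + s), x t⟫) t := by
      intro x x' hx
      have := hb.inner ℝ hx
      rwa [real_inner_smul_left] at this
    have := ((hi hw).mul ((h.diff _).hasDerivAt.comp t (hi hz))).const_mul (s / (2 * Real.pi))
    refine this.congr_deriv ?_
    simp only [Function.comp]
    ring
  · filter_upwards [hl₁, hl₂] with r h1 h2 s hs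
    have i1 := hinc w K₁ r s h1
    have i2 := hinc z K₂ r s h2
    have hs1 : |s / (2 * Real.pi)| ≤ 1 := by
      rw [abs_of_nonneg (by have := hs.1; positivity), div_le_one (by positivity)]
      exact hs.2
    rw [← mul_sub, norm_mul]
    refine (mul_le_of_le_one_left (norm_nonneg _) hs1).trans ?_
    set a := ⟪bet (ω * r + s), w r⟫
    set b := ⟪bet (ω * t + s), w t⟫ with hb
    set c := ⟪bet (ω * r + s), z r⟫
    set d := ⟪bet (ω * t + s), z t⟫
    have e : a * σ c - b * σ d = (a - b) * σ c + b * (σ c - σ d) := by ring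
    rw [e]
    refine (norm_add_le _ _).trans ?_
    rw [norm_mul, norm_mul]
    have j1 : ‖a - b‖ * ‖σ c‖ ≤ ((K₁ + |ω| * ‖w t‖) * ‖r - t‖) * A :=
      mul_le_mul i1 (h.bdd c) (norm_nonneg _) (by positivity)
    have j2 : ‖b‖ * ‖σ c - σ d‖ ≤ ‖w t‖ * (L * ((K₂ + |ω| * ‖z t‖) * ‖r - t‖)) := by
      refine mul_le_mul (inner_bet_le _ _) ?_ (norm_nonneg _) (norm_nonneg _)
      exact (h.lip c d).trans (mul_le_mul_of_nonneg_left i2 hL)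
    refine (add_le_add j1 j2).trans (le_of_eq ?_)
    ring

lemma SD.Wc_le (h : SD σ A L) (θ : ℝ) (w z : E2) : |Wc σ θ w z| ≤ 2 * Real.pi * (A * ‖w‖) := by
  have := intervalIntegral.norm_integral_le_of_norm_le_const (a := 0) (b := 2 * Real.pi)
    (C := A * ‖w‖)
    (f := fun s => s / (2 * Real.pi) * (⟪bet (θ + s), w⟫ * σ ⟪bet (θ + s), z⟫)) (by
      intro s hs
      rw [Set.uIoc_of_le two_pi_nonneg] at hs
      have hs1 : ‖s / (2 * Real.pi)‖ ≤ 1 := by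
        rw [Real.norm_of_nonneg (by have := hs.1; positivity), div_le_one (by positivity)]
        exact hs.2
      rw [norm_mul]
      refine (mul_le_of_le_one_left (norm_nonneg _) hs1).trans ?_
      rw [norm_mul, mul_comm A]
      exact mul_le_mul (inner_bet_le _ _) (h.bdd _) (norm_nonneg _) (norm_nonneg _))
  rw [sub_zero, abs_of_nonneg two_pi_nonneg] at this
  rw [mul_comm (2 * Real.pi)]
  exact this

/-- the quadratic form of the derivative of the averaged field -/
def Qm (σ : ℝ → ℝ) (z y : E2) : ℝ :=
  (2 * Real.pi)⁻¹ * ∫ s in (0:ℝ)..(2 * Real.pi), deriv σ ⟪bet s, z⟫ * ⟪bet s, y⟫ ^ 2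

lemma SD.DF_norm (h : SD σ A L) (z y u : E2) (hu : ‖u‖ ≤ A) :
    ‖DF σ z (y - u)‖ ≤ Qm σ z y + L * (1 + A) := by
  refine (avg_norm _).trans ?_
  have e : L * (1 + A) = (2 * Real.pi)⁻¹ * ∫ s in (0:ℝ)..(2 * Real.pi), L * (1 + A) := by
    rw [intervalIntegral.integral_const]
    have := Real.pi_pos
    simp
    field_simp
  have i1 : IntervalIntegrable (fun s => deriv σ ⟪bet s, z⟫ * ⟪bet s, y⟫ ^ 2) volume 0
      (2 * Real.pi) := (h.d_int (by fun_prop) _ _).mul_continuousOn (by fun_prop)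
  rw [e, Qm, ← mul_add, ← intervalIntegral.integral_add i1 (by simp)]
  refine mul_le_mul_of_nonneg_left ?_ (by positivity)
  refine intervalIntegral.integral_mono two_pi_nonneg ?_ (i1.add (by simp)) ?_
  · exact ((h.d_int (by fun_prop) _ _).mul_continuousOn (by fun_prop)).abs
  · intro s
    have hd := h.d_nonneg ⟪bet s, z⟫
    have hd' := h.d_le ⟪bet s, z⟫
    have hu' := (inner_bet_le s u).trans hu
    simp only
    rw [abs_mul, abs_of_nonneg hd, inner_sub_right]
    set p := ⟪bet s, y⟫
    have : |p - ⟪bet s, u⟫| ≤ p ^ 2 + (1 + A) := by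
      have := abs_sub p ⟪bet s, u⟫
      nlinarith [sq_abs p, sq_nonneg (|p| - 1), abs_nonneg p]
    have hA := h.A_pos
    calc _ ≤ deriv σ ⟪bet s, z⟫ * (p ^ 2 + (1 + A)) := mul_le_mul_of_nonneg_left this hd
      _ ≤ _ := by nlinarith

lemma SD.DF_lower (h : SD σ A L) (z y u : E2) (hu : ‖u‖ ≤ A) :
    Qm σ z y / 2 - L * A ^ 2 / 2 ≤ ⟪y, DF σ z (y - u)⟫ := by
  rw [h.DF_inner]
  have e : L * A ^ 2 / 2 = (2 * Real.pi)⁻¹ * ∫ s in (0:ℝ)..(2 * Real.pi), L * A ^ 2 / 2 := by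
    rw [intervalIntegral.integral_const]
    have := Real.pi_pos
    simp
    field_simp
  have i1 : IntervalIntegrable (fun s => deriv σ ⟪bet s, z⟫ * ⟪bet s, y⟫ ^ 2 / 2) volume 0
      (2 * Real.pi) :=
    ((h.d_int (by fun_prop) _ _).mul_continuousOn (by fun_prop)).div_const _
  rw [e, Qm, mul_div_assoc, ← intervalIntegral.integral_div, ← mul_sub,
    ← intervalIntegral.integral_sub i1 (by simp)]
  refine mul_le_mul_of_nonneg_left ?_ (by positivity)
  refine intervalIntegral.integral_mono two_pi_nonneg (i1.sub (by simp)) ?_ ?_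
  · exact ((h.d_int (by fun_prop) _ _).mul_continuousOn (by fun_prop)).mul_continuousOn (by fun_prop)
  · intro s
    have hd := h.d_nonneg ⟪bet s, z⟫
    have hd' := h.d_le ⟪bet s, z⟫
    have hu' := (inner_bet_le s u).trans hu
    simp only
    rw [inner_sub_right]
    set p := ⟪bet s, y⟫
    set a := ⟪bet s, u⟫
    have ha : a ^ 2 ≤ A ^ 2 := sq_le_sq' (by linarith [abs_le.1 hu']) (abs_le.1 hu').2
    have h1 : p ^ 2 / 2 - A ^ 2 / 2 ≤ (p - a) * p := by nlinarith [sq_nonneg (p - a)]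
    have h2 := mul_le_mul_of_nonneg_left h1 hd
    have h3 := mul_le_mul_of_nonneg_right hd' (by positivity : 0 ≤ A ^ 2 / 2)
    linarith

lemma SD.Bc_le (h : SD σ A L) (θ : ℝ) (z y u c w' : E2) (hu : ‖u‖ ≤ A) (hc : ‖c‖ ≤ A) :
    |Bc σ θ ((2:ℝ) • y + c) z w' (y - u)| ≤
      2 * Real.pi * (A * ‖w'‖ + 4 * A ^ 2 * L + 4 * Qm σ z y) := by
  have e := shift_int (fun b : E2 => A * ‖w'‖ + 4 * A ^ 2 * L + 4 * (deriv σ ⟪b, z⟫ * ⟪b, y⟫ ^ 2)) θ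
  have i0 : ∀ θ : ℝ, IntervalIntegrable (fun s => 4 * (deriv σ ⟪bet (θ + s), z⟫ * ⟪bet (θ + s), y⟫ ^ 2))
      volume 0 (2 * Real.pi) := fun θ =>
    ((h.d_int (by fun_prop) _ _).mul_continuousOn (by fun_prop)).const_mul 4
  have hR : 2 * Real.pi * (A * ‖w'‖ + 4 * A ^ 2 * L + 4 * Qm σ z y) =
      ∫ s in (0:ℝ)..(2 * Real.pi), (A * ‖w'‖ + 4 * A ^ 2 * L +
        4 * (deriv σ ⟪bet (θ + s), z⟫ * ⟪bet (θ + s), y⟫ ^ 2)) := by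
    have i0' := i0 0
    simp only [zero_add] at i0'
    rw [e, intervalIntegral.integral_add (by simp) i0', intervalIntegral.integral_const,
      intervalIntegral.integral_const_mul, Qm]
    have := Real.pi_pos
    simp
    field_simp
  rw [hR, ← Real.norm_eq_abs]
  unfold Bc
  refine intervalIntegral.norm_integral_le_of_norm_le (μ := volume) two_pi_nonneg ?_
    (IntervalIntegrable.add intervalIntegrable_const (i0 θ))
  refine Filter.Eventually.of_forall fun s hs => ?_
  have hs1 : ‖s / (2 * Real.pi)‖ ≤ 1 := by
    rw [Real.norm_of_nonneg (by have := hs.1; positivity), div_le_one (by positivity)]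
    exact hs.2
  rw [norm_mul]
  refine (mul_le_of_le_one_left (norm_nonneg _) hs1).trans ?_
  have hd := h.d_nonneg ⟪bet (θ + s), z⟫
  have hd' := h.d_le ⟪bet (θ + s), z⟫
  have hu' := (inner_bet_le (θ + s) u).trans hu
  have hc' := (inner_bet_le (θ + s) c).trans hc
  rw [inner_sub_right, inner_add_right, inner_smul_right]
  set p := ⟪bet (θ + s), y⟫
  set a := ⟪bet (θ + s), u⟫
  set k := ⟪bet (θ + s), c⟫
  set D := deriv σ ⟪bet (θ + s), z⟫
  refine (norm_add_le _ _).trans ?_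
  have h1 : ‖⟪bet (θ + s), w'⟫ * σ ⟪bet (θ + s), z⟫‖ ≤ ‖w'‖ * A := by
    rw [norm_mul]
    exact mul_le_mul (inner_bet_le _ _) (h.bdd _) (norm_nonneg _) (norm_nonneg _)
  have h2 : ‖(2 * p + k) * (D * (p - a))‖ = D * (|2 * p + k| * |p - a|) := by
    rw [norm_mul, norm_mul, Real.norm_of_nonneg hd, Real.norm_eq_abs, Real.norm_eq_abs]; ring
  have hA := h.A_pos
  have h3 : |2 * p + k| * |p - a| ≤ 4 * p ^ 2 + 4 * A ^ 2 := by
    have g1 : |2 * p + k| ≤ 2 * |p| + A := by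
      refine (abs_add_le _ _).trans ?_
      rw [abs_mul, abs_two]; linarith
    have g2 : |p - a| ≤ |p| + A := (abs_sub _ _).trans (by linarith)
    refine (mul_le_mul g1 g2 (abs_nonneg _) (by positivity)).trans ?_
    nlinarith [sq_abs p, sq_nonneg (|p| - A)]
  have h4 := mul_le_mul_of_nonneg_left h3 hd
  have h5 := mul_le_mul_of_nonneg_right hd' (by positivity : 0 ≤ 4 * A ^ 2)
  rw [h2]
  linarith

end

/-! ### Decay of the averaged system -/

section
variable {σ : ℝ → ℝ} {A L : ℝ}

lemma int_abs_ge (v : E2) :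
    ‖v‖ / 2 ≤ (2 * Real.pi)⁻¹ * ∫ s in (0:ℝ)..(2 * Real.pi), |⟪bet s, v⟫| := by
  rcases (norm_nonneg v).eq_or_lt with h0 | h0
  · rw [← h0, zero_div]
    refine mul_nonneg (by positivity) ?_
    exact intervalIntegral.integral_nonneg two_pi_nonneg fun s _ => abs_nonneg _
  · have h1 : Real.pi * ‖v‖ ^ 2 ≤ (∫ s in (0:ℝ)..(2 * Real.pi), |⟪bet s, v⟫|) * ‖v‖ := by
      rw [← int_sq, ← intervalIntegral.integral_mul_const]
      refine intervalIntegral.integral_mono two_pi_nonneg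
        (Continuous.intervalIntegrable (by fun_prop) _ _)
        (Continuous.intervalIntegrable (by fun_prop) _ _) fun s => ?_
      simp only
      rw [← sq_abs, sq]
      exact mul_le_mul_of_nonneg_left (inner_bet_le _ _) (abs_nonneg _)
    have h2 : Real.pi * ‖v‖ ≤ ∫ s in (0:ℝ)..(2 * Real.pi), |⟪bet s, v⟫| := by
      refine le_of_mul_le_mul_right ?_ h0
      linarith
    rw [inv_mul_eq_div, le_div_iff₀ (by positivity)]
    linarith

/-- lower bound of averages by an affine function of `|⟪β, v⟫|` -/
lemma avg_ge {g : ℝ → ℝ} {a b : ℝ} (v : E2) (ha : 0 ≤ a) (hg : Continuous g)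
    (hb : ∀ s, a * |⟪bet s, v⟫| - b ≤ g s) :
    a * (‖v‖ / 2) - b ≤ (2 * Real.pi)⁻¹ * ∫ s in (0:ℝ)..(2 * Real.pi), g s := by
  have h1 : ∫ s in (0:ℝ)..(2 * Real.pi), (a * |⟪bet s, v⟫| - b) ≤
      ∫ s in (0:ℝ)..(2 * Real.pi), g s :=
    intervalIntegral.integral_mono two_pi_nonneg
        (Continuous.intervalIntegrable (by fun_prop) _ _)
        (Continuous.intervalIntegrable (by fun_prop) _ _) hb
  rw [intervalIntegral.integral_sub (Continuous.intervalIntegrable (by fun_prop) _ _) (by simp),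
    intervalIntegral.integral_const_mul, intervalIntegral.integral_const] at h1
  have h2 := mul_le_mul_of_nonneg_left h1 (by positivity : 0 ≤ (2 * Real.pi)⁻¹)
  refine le_trans ?_ h2
  have h3 := mul_le_mul_of_nonneg_left (int_abs_ge v) ha
  have e : (2 * Real.pi)⁻¹ * (2 * Real.pi - 0) • b = b := by
    have := Real.pi_pos
    simp
    field_simp
  rw [mul_sub, e]
  linarith

lemma SD.sign (h : SD σ A L) (q : ℝ) : 0 ≤ σ q * q := by
  rcases le_total 0 q with hq | hq
  · exact mul_nonneg (by rw [← h.zero]; exact h.mono hq) hq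
  · exact mul_nonneg_of_nonpos_of_nonpos (by rw [← h.zero]; exact h.mono hq) hq

lemma SD.incr (h : SD σ A L) (q p : ℝ) : 0 ≤ (σ q - σ (q - p)) * p := by
  rcases le_total 0 p with hp | hp
  · exact mul_nonneg (sub_nonneg.2 (h.mono (by linarith))) hp
  · exact mul_nonneg_of_nonpos_of_nonpos (sub_nonpos.2 (h.mono (by linarith))) hp

lemma SD.inner_diff (h : SD σ A L) (z y : E2) : ⟪y, Fm σ z⟫ - ⟪y, Fm σ (z - y)⟫ =
    (2 * Real.pi)⁻¹ * ∫ s in (0:ℝ)..(2 * Real.pi),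
      (σ ⟪bet s, z⟫ - σ (⟪bet s, z⟫ - ⟪bet s, y⟫)) * ⟪bet s, y⟫ := by
  have hc := h.cont
  rw [h.Fm_inner, h.Fm_inner, ← mul_sub, ← intervalIntegral.integral_sub
    (Continuous.intervalIntegrable (by fun_prop) _ _)
    (Continuous.intervalIntegrable (by fun_prop) _ _)]
  congr 1
  refine intervalIntegral.integral_congr fun s _ => ?_
  simp only [inner_sub_right]
  ring

lemma SD.decay (h : SD σ A L) : ∃ η > 0, ∃ c > 0, ∀ z y : E2, (η ≤ ‖z‖ ∨ 8 ≤ ‖y‖) →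
    c ≤ ‖Fm σ z‖ ^ 2 + (⟪y, Fm σ z⟫ - ⟪y, Fm σ (z - y)⟫) := by
  have hcont := h.cont
  have h1 := h.pos 1 one_pos
  have hL := h.L_nonneg
  obtain ⟨η, hη, hη1, hση⟩ : ∃ η > 0, η ≤ 1 ∧ σ η ≤ σ 1 / 2 := by
    refine ⟨min 1 (σ 1 / (2 * (L + 1))), by positivity, min_le_left _ _, ?_⟩
    set η := min 1 (σ 1 / (2 * (L + 1))) with hη
    have hη0 : 0 < η := by positivity
    have h2 := h.lip η 0
    rw [h.zero, sub_zero, sub_zero, abs_of_pos hη0] at h2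
    have h3 : η ≤ σ 1 / (2 * (L + 1)) := min_le_right _ _
    rw [le_div_iff₀ (by positivity)] at h3
    have := le_abs_self (σ η)
    nlinarith
  have hκ := h.pos (η / 4) (by positivity)
  set κ := σ (η / 4)
  refine ⟨η, hη, min (σ 1) ((κ / 4) ^ 2), by positivity, fun z y hzy => ?_⟩
  have hmon : 0 ≤ ⟪y, Fm σ z⟫ - ⟪y, Fm σ (z - y)⟫ := by
    rw [h.inner_diff]
    refine mul_nonneg (by positivity) ?_
    exact intervalIntegral.integral_nonneg two_pi_nonneg fun s _ => h.incr _ _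
  by_cases hz : η ≤ ‖z‖
  · have h2 : κ * (‖z‖ / 2) - κ * (η / 4) ≤ ⟪z, Fm σ z⟫ := by
      rw [h.Fm_inner]
      refine avg_ge z hκ.le (by fun_prop) fun s => ?_
      set q := ⟪bet s, z⟫
      have hs := h.sign q
      rcases le_total |q| (η / 4) with hq | hq
      · have := mul_le_mul_of_nonneg_left hq hκ.le
        linarith
      · have e : σ q * q = σ |q| * |q| := by
          rcases abs_cases q with ⟨e, _⟩ | ⟨e, _⟩ <;> rw [e]
          rw [h.odd]; ring
        rw [e]
        have := mul_le_mul_of_nonneg_right (h.mono hq) (abs_nonneg q)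
        have : 0 ≤ κ * (η / 4) := by positivity
        linarith
    have h3 : κ / 4 * ‖z‖ ≤ ‖Fm σ z‖ * ‖z‖ := by
      have := real_inner_le_norm z (Fm σ z)
      nlinarith
    have h4 : κ / 4 ≤ ‖Fm σ z‖ := le_of_mul_le_mul_right h3 (by linarith)
    have h5 : (κ / 4) ^ 2 ≤ ‖Fm σ z‖ ^ 2 := by gcongr
    have := min_le_right (σ 1) ((κ / 4) ^ 2)
    linarith
  · have hy : 8 ≤ ‖y‖ := hzy.resolve_left hz
    push Not at hz
    have h2 : σ 1 / 2 * (‖y‖ / 2) - σ 1 ≤ ⟪y, Fm σ z⟫ - ⟪y, Fm σ (z - y)⟫ := by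
      rw [h.inner_diff]
      refine avg_ge y (by positivity) (by fun_prop) fun s => ?_
      have hq := abs_le.1 ((inner_bet_le s z).trans hz.le)
      set q := ⟪bet s, z⟫
      set p := ⟪bet s, y⟫
      have hs := h.incr q p
      have g1 := h.mono hq.2
      have g2 := h.mono hq.1
      rw [h.odd] at g2
      rcases le_total |p| 2 with hp | hp
      · nlinarith
      · rcases le_abs.1 hp with hp | hp
        · rw [abs_of_nonneg (by linarith)]
          have g3 := h.mono (by linarith : q - p ≤ -1)
          rw [h.odd] at g3
          have := mul_le_mul_of_nonneg_right (by linarith : σ 1 / 2 ≤ σ q - σ (q - p))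
            (by linarith : 0 ≤ p)
          linarith
        · rw [abs_of_nonpos (by linarith)]
          have g3 := h.mono (by linarith : 1 ≤ q - p)
          have := mul_le_mul_of_nonneg_right (by linarith : σ 1 / 2 ≤ σ (q - p) - σ q)
            (by linarith : 0 ≤ -p)
          linarith
    have := min_le_left (σ 1) ((κ / 4) ^ 2)
    have : 0 ≤ ‖Fm σ z‖ ^ 2 := by positivity
    nlinarith

lemma SD.Ph_le (h : SD σ A L) (z : E2) : Ph σ z ≤ A * ‖z‖ := by
  have hc := h.prim_cont
  refine avg_le ?_ fun s => ?_
  · exact (hc.comp (by fun_prop : Continuous fun s => ⟪bet s, z⟫)).intervalIntegrable _ _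
  · have := h.prim_lip ⟪bet s, z⟫ 0
    simp only [intervalIntegral.integral_same, sub_zero] at this
    refine (le_abs_self _).trans (this.trans ?_)
    exact mul_le_mul_of_nonneg_left (inner_bet_le _ _) h.A_pos.le

/-- The modified Lyapunov function. -/
def Um (σ : ℝ → ℝ) (k ω θ : ℝ) (z y : E2) : ℝ :=
  V0 σ z y + ω⁻¹ * Wc σ θ ((2:ℝ) • y + Fm σ z) z - ω⁻¹ * (k * ⟪y, Fm σ z⟫)

lemma SD.Um_deriv (h : SD σ A L) : ∃ k C, 0 < k ∧ 0 < C ∧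
    ∀ (ω t : ℝ) (z y : ℝ → E2), 0 < ω →
      HasDerivAt z (y t - σ ⟪bet (ω * t), z t⟫ • bet (ω * t)) t →
      HasDerivAt y (-(σ ⟪bet (ω * t), z t⟫ • bet (ω * t))) t →
      ∃ U', HasDerivAt (fun t => Um σ k ω (ω * t) (z t) (y t)) U' t ∧
        U' ≤ -(‖Fm σ (z t)‖ ^ 2 + (⟪y t, Fm σ (z t)⟫ - ⟪y t, Fm σ (z t - y t)⟫)) + ω⁻¹ * C := by
  have hA := h.A_pos
  have hL := h.L_nonneg
  have hpi := Real.pi_pos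
  refine ⟨2 * (2 * Real.pi * (A + 4)),
    2 * Real.pi * (A * (2 * A + L * (1 + A)) + 4 * A ^ 2 * L)
      + (2 * Real.pi * (A + 4)) * (L * A ^ 2) + 2 * (2 * Real.pi * (A + 4)) * A ^ 2,
    by positivity, by positivity, ?_⟩
  set k₁ := 2 * Real.pi * (A + 4) with hk₁
  have hk₁0 : 0 < k₁ := by positivity
  intro ω t z y hω hz hy
  set u : E2 := σ ⟪bet (ω * t), z t⟫ • bet (ω * t) with hu
  have hun : ‖u‖ ≤ A := by
    rw [hu, norm_smul, bet_norm, mul_one]; exact h.bdd _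
  have hF := h.Fm_deriv hz
  have hw : HasDerivAt (fun t => (2:ℝ) • y t + Fm σ (z t))
      ((2:ℝ) • (-u) + DF σ (z t) (y t - u)) t := (hy.const_smul (2:ℝ)).add hF
  have hW := h.Wc_deriv (ω := ω) hw hz
  have hY := hy.inner ℝ hF
  have hN := hy.norm_sq
  have hP1 := h.Ph_deriv hz
  have hP2 := h.Ph_deriv (hz.sub hy)
  have hU := (((hN.add hP1).add hP2).add (hW.const_mul ω⁻¹)).sub ((hY.const_mul (2 * k₁)).const_mul ω⁻¹)
  refine ⟨_, hU.congr_of_eventuallyEq (Filter.Eventually.of_forall fun r => ?_), ?_⟩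
  · simp only [Um, h.V0_eq]
    rfl
  have hQ1 := h.DF_norm (z t) (y t) u hun
  have hQ2 := h.DF_lower (z t) (y t) u hun
  have hFn := h.Fm_norm (z t)
  have hB := h.Bc_le (ω * t) (z t) (y t) u (Fm σ (z t)) ((2:ℝ) • (-u) + DF σ (z t) (y t - u)) hun hFn
  have hw' : ‖(2:ℝ) • (-u) + DF σ (z t) (y t - u)‖ ≤ 2 * A + (Qm σ (z t) (y t) + L * (1 + A)) := by
    refine (norm_add_le _ _).trans (add_le_add ?_ hQ1)
    rw [norm_smul, norm_neg]
    simp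
    linarith
  have hB2 := (le_abs_self _).trans hB
  have huF : ⟪u, Fm σ (z t)⟫ ≤ A ^ 2 := by
    refine (real_inner_le_norm _ _).trans ?_
    rw [sq]; exact mul_le_mul hun hFn (norm_nonneg _) hA.le
  set Q := Qm σ (z t) (y t)
  set B := Bc σ (ω * t) ((2:ℝ) • y t + Fm σ (z t)) (z t) ((2:ℝ) • (-u) + DF σ (z t) (y t - u)) (y t - u)
  set G := ⟪y t, DF σ (z t) (y t - u)⟫ with hG
  have hbw : ⟪bet (ω * t), (2:ℝ) • y t + Fm σ (z t)⟫ * σ ⟪bet (ω * t), z t⟫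
      = 2 * ⟪y t, u⟫ + ⟪u, Fm σ (z t)⟫ := by
    rw [hu, real_inner_smul_left, real_inner_smul_right, inner_add_right, real_inner_smul_right,
      real_inner_comm (y t)]
    ring
  have hwF : ⟪(2:ℝ) • y t + Fm σ (z t), Fm σ (z t)⟫ = 2 * ⟪y t, Fm σ (z t)⟫ + ‖Fm σ (z t)‖ ^ 2 := by
    rw [inner_add_left, real_inner_smul_left, real_inner_self_eq_norm_sq]
  have hsub : y t - u - -u = y t := by abel
  have hmain : B - 2 * k₁ * (G - ⟪u, Fm σ (z t)⟫) ≤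
      2 * Real.pi * (A * (2 * A + L * (1 + A)) + 4 * A ^ 2 * L)
      + k₁ * (L * A ^ 2) + 2 * k₁ * A ^ 2 := by
    have a1 : B ≤ 2 * Real.pi * (A * (2 * A + L * (1 + A)) + 4 * A ^ 2 * L) + k₁ * Q := by
      have := mul_le_mul_of_nonneg_left hw' hA.le
      have := mul_le_mul_of_nonneg_left this (by positivity : 0 ≤ 2 * Real.pi)
      rw [hk₁]
      linarith
    have a2 := mul_le_mul_of_nonneg_left hQ2 (by positivity : 0 ≤ 2 * k₁)
    have a3 := mul_le_mul_of_nonneg_left huF (by positivity : 0 ≤ 2 * k₁)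
    linarith
  have hfin := mul_le_mul_of_nonneg_left hmain (inv_nonneg.2 hω.le)
  simp only [Pi.sub_apply]
  rw [hsub, hbw, hwF, inner_sub_left, inner_neg_right, inner_neg_left]
  have e : ∀ X : ℝ, ω⁻¹ * (ω * X + B) = X + ω⁻¹ * B := fun X => by field_simp
  rw [e]
  linarith

lemma SD.Um_close (h : SD σ A L) {k : ℝ} (hk : 0 < k) {ω : ℝ} (hω : 0 < ω) (θ : ℝ) (z y : E2) :
    |Um σ k ω θ z y - V0 σ z y| ≤ ω⁻¹ * ((2 * Real.pi * (A * (2 + A)) + k * A) * (1 + ‖y‖)) := by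
  have hA := h.A_pos
  have hpi := Real.pi_pos
  have e : Um σ k ω θ z y - V0 σ z y
      = ω⁻¹ * (Wc σ θ ((2:ℝ) • y + Fm σ z) z - k * ⟪y, Fm σ z⟫) := by unfold Um; ring
  rw [e, abs_mul, abs_of_pos (inv_pos.2 hω)]
  refine mul_le_mul_of_nonneg_left ?_ (inv_nonneg.2 hω.le)
  refine (abs_sub _ _).trans ?_
  have h1 := h.Wc_le θ ((2:ℝ) • y + Fm σ z) z
  have h2 : ‖(2:ℝ) • y + Fm σ z‖ ≤ (2 + A) * (1 + ‖y‖) := by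
    refine (norm_add_le _ _).trans ?_
    rw [norm_smul]
    have := h.Fm_norm z
    have := norm_nonneg y
    simp
    nlinarith
  have h3 : |⟪y, Fm σ z⟫| ≤ A * (1 + ‖y‖) := by
    refine (abs_real_inner_le_norm _ _).trans ?_
    have := mul_le_mul_of_nonneg_left (h.Fm_norm z) (norm_nonneg y)
    nlinarith
  rw [abs_mul, abs_of_pos hk]
  have h4 := mul_le_mul_of_nonneg_left h3 hk.le
  have h5 := mul_le_mul_of_nonneg_left (mul_le_mul_of_nonneg_left h2 hA.le)
    (by positivity : 0 ≤ 2 * Real.pi)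
  linarith

end

/-- Key decay estimate for `(T_ε)`: for `ε` small, from any initial condition with
`V₀ ≥ R` there is a time `T ∈ [ρ max(1,‖y₀‖), 2ρ max(1,‖y₀‖)]` along which `V₀`
decreases by at least `C₁ T`. -/
theorem stmt12 (σ : ℝ → ℝ) (hσ : IsSaturation σ) :
    ∃ ε₀ > 0, ∃ R > 0, ∃ C₁ > 0, ∃ ρ : ℝ, 0 < ρ ∧ ρ < 1 ∧
      ∀ ε : ℝ, 0 < ε → ε < ε₀ → ∀ z₀ y₀ : E2, R ≤ V0 σ z₀ y₀ →
        ∃ T : ℝ, ρ * max 1 ‖y₀‖ ≤ T ∧ T ≤ 2 * ρ * max 1 ‖y₀‖ ∧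
          ∀ z y : ℝ → E2, IsSolTeps σ ε z y → z 0 = z₀ → y 0 = y₀ →
            V0 σ (z T) (y T) - V0 σ z₀ y₀ ≤ -C₁ * T := by
  obtain ⟨A, L, h⟩ := exists_SD hσ
  obtain ⟨η, hη, c, hc, hdec⟩ := h.decay
  obtain ⟨k, C, hk, hC, hU⟩ := h.Um_deriv
  have hA := h.A_pos
  have hpi := Real.pi_pos
  set C₄ := 2 * Real.pi * (A * (2 + A)) + k * A with hC₄
  have hC₄0 : 0 < C₄ := by positivity
  obtain ⟨ρ, hρ, hρ1, hρA⟩ : ∃ ρ : ℝ, 0 < ρ ∧ ρ ≤ 1 / 2 ∧ A * ρ ≤ 1 / 2 := by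
    refine ⟨min (1 / 2) (1 / (2 * A)), by positivity, min_le_left _ _, ?_⟩
    have := mul_le_mul_of_nonneg_left (min_le_right (1 / 2) (1 / (2 * A))) hA.le
    refine this.trans (le_of_eq ?_)
    field_simp
  set C₅ := C + 5 * C₄ / ρ with hC₅
  have hC₅0 : 0 < C₅ := by positivity
  refine ⟨c / (2 * C₅), by positivity, 256 + 16 * A + 2 * A * (η + 8 * (24 + A)), by positivity,
    c / 2, by positivity, ρ, hρ, by linarith, ?_⟩
  intro ε hε hε0 z₀ y₀ hR
  set m := max 1 ‖y₀‖ with hm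
  have hm1 : 1 ≤ m := le_max_left _ _
  have hmy : ‖y₀‖ ≤ m := le_max_right _ _
  refine ⟨ρ * m, le_rfl, by nlinarith, ?_⟩
  intro z y hsol hz0 hy0
  set T := ρ * m with hT
  have hT0 : 0 < T := by positivity
  have hAT : A * T ≤ m / 2 := by rw [hT]; nlinarith
  set ω := 2 * Real.pi / ε with hω
  have hω0 : 0 < ω := by positivity
  have hdz : ∀ t, 0 ≤ t → HasDerivAt z (y t - σ ⟪bet (ω * t), z t⟫ • bet (ω * t)) t := by
    intro t ht
    have := (hsol t ht).1
    rwa [bvp_eq] at this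
  have hdy : ∀ t, 0 ≤ t → HasDerivAt y (-(σ ⟪bet (ω * t), z t⟫ • bet (ω * t))) t := by
    intro t ht
    have := (hsol t ht).2
    rwa [bvp_eq, neg_smul] at this
  have hun : ∀ t, ‖σ ⟪bet (ω * t), z t⟫ • bet (ω * t)‖ ≤ A := by
    intro t
    rw [norm_smul, bet_norm, mul_one]; exact h.bdd _
  -- a priori bounds
  have hyt : ∀ t ∈ Set.Icc 0 T, ‖y t - y₀‖ ≤ m / 2 := by
    intro t ht
    have := norm_image_sub_le_of_norm_deriv_le_segment' (f := y) (a := 0) (b := T) (C := A)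
      (fun x hx => (hdy x hx.1).hasDerivWithinAt)
      (fun x hx => by rw [norm_neg]; exact hun x) t ht
    rw [hy0, sub_zero] at this
    have h2 := mul_le_mul_of_nonneg_left ht.2 hA.le
    linarith
  have hreg : ∀ t ∈ Set.Icc 0 T, η ≤ ‖z t‖ ∨ 8 ≤ ‖y t‖ := by
    intro t ht
    by_cases hy16 : 16 ≤ ‖y₀‖
    · right
      have e : m = ‖y₀‖ := max_eq_right (by linarith)
      have h1 := hyt t ht
      have h2 := norm_sub_norm_le y₀ (y t)
      rw [norm_sub_rev] at h2
      linarith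
    · left
      push Not at hy16
      have hm16 : m ≤ 16 := max_le (by norm_num) hy16.le
      have hT8 : T ≤ 8 := by rw [hT]; nlinarith
      have hzt := norm_image_sub_le_of_norm_deriv_le_segment' (f := z) (a := 0) (b := T)
        (C := 24 + A) (fun x hx => (hdz x hx.1).hasDerivWithinAt)
        (fun x hx => by
          refine (norm_sub_le _ _).trans (add_le_add ?_ (hun x))
          have h1 := hyt x ⟨hx.1, hx.2.le⟩
          have h2 := norm_sub_norm_le (y x) y₀
          linarith) t ht
      rw [hz0, sub_zero] at hzt
      have hzt2 : ‖z t - z₀‖ ≤ 8 * (24 + A) := by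
        have := mul_le_mul_of_nonneg_left (ht.2.trans hT8) (by positivity : 0 ≤ 24 + A)
        linarith
      have hz3 := norm_sub_norm_le z₀ (z t)
      rw [norm_sub_rev] at hz3
      have hV : V0 σ z₀ y₀ ≤ 256 + 16 * A + 2 * A * ‖z₀‖ := by
        rw [h.V0_eq]
        have h1 := h.Ph_le z₀
        have h2 := h.Ph_le (z₀ - y₀)
        have h3 := mul_le_mul_of_nonneg_left (norm_sub_le z₀ y₀) hA.le
        have h4 : ‖y₀‖ ^ 2 ≤ 256 := by nlinarith [norm_nonneg y₀]
        nlinarith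
      have : η + 8 * (24 + A) ≤ ‖z₀‖ := by
        refine le_of_mul_le_mul_left (a := 2 * A) ?_ (by positivity)
        linarith
      linarith
  -- decay of the modified function
  have hder : ∀ t ∈ Set.Icc 0 T, ∃ U', HasDerivAt (fun t => Um σ k ω (ω * t) (z t) (y t)) U' t ∧
      U' ≤ -c + ω⁻¹ * C := by
    intro t ht
    obtain ⟨U', h1, h2⟩ := hU ω t z y hω0 (hdz t ht.1) (hdy t ht.1)
    have := hdec (z t) (y t) (hreg t ht)
    exact ⟨U', h1, by linarith⟩
  have hmv := (convex_Icc (0:ℝ) T).image_sub_le_mul_sub_of_deriv_le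
    (f := fun t => Um σ k ω (ω * t) (z t) (y t)) (C := -c + ω⁻¹ * C)
    (fun t ht => by
      obtain ⟨U', h1, -⟩ := hder t ht
      exact h1.continuousAt.continuousWithinAt)
    (fun t ht => by
      obtain ⟨U', h1, -⟩ := hder t (interior_subset ht)
      exact h1.differentiableAt.differentiableWithinAt)
    (fun t ht => by
      obtain ⟨U', h1, h2⟩ := hder t (interior_subset ht)
      rw [h1.deriv]; exact h2)
    0 (Set.left_mem_Icc.2 hT0.le) T (Set.right_mem_Icc.2 hT0.le) hT0.le
  simp only [sub_zero] at hmv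
  have hc0 := (abs_le.1 (h.Um_close hk hω0 (ω * 0) (z 0) (y 0))).2
  have hcT := (abs_le.1 (h.Um_close hk hω0 (ω * T) (z T) (y T))).1
  rw [← hC₄] at hc0 hcT
  rw [hz0, hy0] at hc0 hmv
  have hyT : ‖y T‖ ≤ m + m / 2 := by
    have h1 := hyt T (Set.right_mem_Icc.2 hT0.le)
    have h2 := norm_sub_norm_le (y T) y₀
    linarith
  have hsum : ω⁻¹ * (C₄ * (1 + ‖y₀‖)) + ω⁻¹ * (C₄ * (1 + ‖y T‖)) ≤ ω⁻¹ * (5 * C₄ / ρ) * T := by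
    have e : ω⁻¹ * (5 * C₄ / ρ) * T = ω⁻¹ * (C₄ * (5 * m)) := by
      rw [hT]; field_simp
    rw [e, ← mul_add, ← mul_add]
    refine mul_le_mul_of_nonneg_left ?_ (by positivity)
    refine mul_le_mul_of_nonneg_left ?_ hC₄0.le
    linarith
  have hsmall : ω⁻¹ * C₅ ≤ c / 2 := by
    have h1 : ω⁻¹ ≤ ε := by
      rw [hω, inv_div, div_le_iff₀ (by positivity)]
      have := Real.pi_gt_three
      nlinarith
    have h2 : ε * (2 * C₅) ≤ c := by
      rw [lt_div_iff₀ (by positivity)] at hε0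
      exact hε0.le
    have h3 := mul_le_mul_of_nonneg_right h1 hC₅0.le
    linarith
  have hfin := mul_le_mul_of_nonneg_right hsmall hT0.le
  have e5 : ω⁻¹ * C₅ * T = ω⁻¹ * C * T + ω⁻¹ * (5 * C₄ / ρ) * T := by rw [hC₅]; ring
  linarith
end
end
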